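/- Let Ω ⊂ ℝⁿ be a bounded open set, 0 < λ ≤ Λ, γ ≥ 0, and let F : S(n) × ℝⁿ × ℝ × Ω̄ × [0,T] → ℝ be continuous, uniformly elliptic with constants λ, Λ, satisfy the structure condition with constant γ and moduli ω_R, and satisfy |F(M,P,r,x,t) - F(M,P,r,y,s)| ≤ σ₁(|x-y|) + σ₂(|t-s|) for all arguments, where σ₁, σ₂ are moduli of continuity (nondecreasing, continuous, vanishing at 0). Let h ∈ (0,1] and let z_{0,h} ≡ 0 and, for each n ≥ 0, let z_{n+1,h} ∈ C(Ω̄) be a viscosity solution of F(D²z, Dz, z, x, (n+1)h) + z/h = z_{n,h}/h in Ω with z = 0 on ∂Ω. Then for every n ≥ 1, ‖z_{n+1,h} - z_{n,h}‖_{L^∞(Ω)} ≤ ‖z_{n,h} - z_{n-1,h}‖_{L^∞(Ω)} + h σ₂(h). -/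

import Mathlib

/-!
The estimate is the comparison principle for one implicit time step. Consecutive iterates
`z (m + 1)` and `z m` solve equations which differ only in the time argument of `F`, by `h`, and in
the right-hand side, `z m / h` against `z (m - 1) / h`. Because of the term `z / h`, a comparison
argument bounds `z (m + 1) - z m` from above by the supremum of `z m - z (m - 1)` plus `h σ₂(h)`,
and exchanging the two iterates gives the bound from below. This is `rothe_comparison`.

The comparison principle for viscosity solutions rests on `exists_ordered_jets`, a version of the
theorem on sums: near a positive maximum of `u - v` there are nearby interior points `ξ`, `η`, a
superjet `(P, X)` of `u` at `ξ` and a subjet `(Q, Y)` of `v` at `η` with `P` close to `Q` and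
`X ≤ Y`. Inserting both jets into the equations and using ellipticity, the structure condition and
the moduli of `F` bounds `u ξ - v η`.

To obtain the jets, `u` and `-v` are replaced by their sup-convolutions over the closure of the
domain, which become convex functions `f`, `g` of all of space after adding a multiple of `‖·‖²`.
At a maximum of `f + g - c ‖·‖²` where `f` and `g` are both twice differentiable, the second-order
conditions give `X ≤ Y`, and the jets pass to `u` and `v` at the points realising the suprema
(`IsSupConvolution.jet`). Such a maximum exists after an arbitrarily small linear perturbation:
this is `jensen`, where the slopes of the perturbations are a Lipschitz function of the maximum
points, so that the latter fill a set of positive measure.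

Twice differentiability almost everywhere of convex functions is Alexandrov's theorem,
`alexandrov`. It is proved through the proximal map `J = (1 + ∂f)⁻¹`, which is nonexpansive and is
`1` minus the gradient of the Moreau envelope. By Rademacher's theorem and Sard's lemma, almost
every `x` is of the form `J y` with `J` differentiable at `y` with invertible derivative `A`, and
there the second-order expansion of the envelope turns into one of `f` with Hessian `A⁻¹ - 1`.
-/

open scoped RealInnerProductSpace
open MeasureTheory Filter Topology Asymptotics Metric Set

noncomputable section

abbrev Eucl (d : ℕ) := EuclideanSpace ℝ (Fin d)

open Classical in
noncomputable def eigs {d : ℕ} (M : Matrix (Fin d) (Fin d) ℝ) : Fin d → ℝ :=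
  if h : M.IsHermitian then h.eigenvalues else 0

noncomputable def specNorm {d : ℕ} (M : Matrix (Fin d) (Fin d) ℝ) : ℝ := ⨆ i, |eigs M i|
noncomputable def posPartNorm {d : ℕ} (M : Matrix (Fin d) (Fin d) ℝ) : ℝ := ⨆ i, max (eigs M i) 0
noncomputable def negPartNorm {d : ℕ} (M : Matrix (Fin d) (Fin d) ℝ) : ℝ := ⨆ i, max (-(eigs M i)) 0
noncomputable def posPartTrace {d : ℕ} (M : Matrix (Fin d) (Fin d) ℝ) : ℝ := ∑ i, max (eigs M i) 0
noncomputable def negPartTrace {d : ℕ} (M : Matrix (Fin d) (Fin d) ℝ) : ℝ := ∑ i, max (-(eigs M i)) 0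

noncomputable def pucciPlus {d : ℕ} (lam Lam : ℝ) (M : Matrix (Fin d) (Fin d) ℝ) : ℝ :=
  -lam * posPartTrace M + Lam * negPartTrace M

noncomputable def pucciMinus {d : ℕ} (lam Lam : ℝ) (M : Matrix (Fin d) (Fin d) ℝ) : ℝ :=
  -Lam * posPartTrace M + lam * negPartTrace M

noncomputable def gradAt {d : ℕ} (φ : Eucl d → ℝ) (x : Eucl d) : Eucl d :=
  (EuclideanSpace.equiv (Fin d) ℝ).symm (fun i => fderiv ℝ φ x (EuclideanSpace.single i 1))

noncomputable def hessAt {d : ℕ} (φ : Eucl d → ℝ) (x : Eucl d) : Matrix (Fin d) (Fin d) ℝ :=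
  Matrix.of fun i j =>
    fderiv ℝ (fun y => fderiv ℝ φ y (EuclideanSpace.single j 1)) x (EuclideanSpace.single i 1)

noncomputable def quadForm {d : ℕ} (M : Matrix (Fin d) (Fin d) ℝ) (v : Eucl d) : ℝ :=
  ∑ i, ∑ j, M i j * v i * v j

def ViscSubsol {d : ℕ} (Ω : Set (Eucl d))
    (G : Matrix (Fin d) (Fin d) ℝ → Eucl d → ℝ → Eucl d → ℝ)
    (g : Eucl d → ℝ) (u : Eucl d → ℝ) : Prop :=
  ∀ x₀ ∈ Ω, ∀ φ : Eucl d → ℝ, ContDiffAt ℝ 2 φ x₀ →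
    IsLocalMax (fun x => u x - φ x) x₀ →
    G (hessAt φ x₀) (gradAt φ x₀) (u x₀) x₀ ≤ g x₀

def ViscSupersol {d : ℕ} (Ω : Set (Eucl d))
    (G : Matrix (Fin d) (Fin d) ℝ → Eucl d → ℝ → Eucl d → ℝ)
    (g : Eucl d → ℝ) (u : Eucl d → ℝ) : Prop :=
  ∀ x₀ ∈ Ω, ∀ φ : Eucl d → ℝ, ContDiffAt ℝ 2 φ x₀ →
    IsLocalMin (fun x => u x - φ x) x₀ →
    g x₀ ≤ G (hessAt φ x₀) (gradAt φ x₀) (u x₀) x₀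

def ViscSol {d : ℕ} (Ω : Set (Eucl d))
    (G : Matrix (Fin d) (Fin d) ℝ → Eucl d → ℝ → Eucl d → ℝ)
    (g : Eucl d → ℝ) (u : Eucl d → ℝ) : Prop :=
  ViscSubsol Ω G g u ∧ ViscSupersol Ω G g u

def UniformlyElliptic {d : ℕ} (lam Lam : ℝ) (X : Set (Eucl d)) (Tset : Set ℝ)
    (F : Matrix (Fin d) (Fin d) ℝ → Eucl d → ℝ → Eucl d → ℝ → ℝ) : Prop :=
  ∀ M N : Matrix (Fin d) (Fin d) ℝ, M.IsSymm → N.PosSemidef →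
    ∀ (P : Eucl d) (v : ℝ), ∀ x ∈ X, ∀ t ∈ Tset,
      -Lam * specNorm N ≤ F (M + N) P v x t - F M P v x t ∧
      F (M + N) P v x t - F M P v x t ≤ -lam * specNorm N

def IsModulus (σ : ℝ → ℝ) : Prop := Monotone σ ∧ Continuous σ ∧ σ 0 = 0

def StructureCondition {d : ℕ} (lam Lam gam : ℝ) (ω : ℝ → ℝ → ℝ)
    (X : Set (Eucl d)) (Tset : Set ℝ)
    (F : Matrix (Fin d) (Fin d) ℝ → Eucl d → ℝ → Eucl d → ℝ → ℝ) : Prop :=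
  (∀ R > 0, IsModulus (ω R)) ∧
  ∀ R > 0, ∀ M N : Matrix (Fin d) (Fin d) ℝ, M.IsSymm → N.IsSymm →
    ∀ (P Q : Eucl d) (r s : ℝ), |r| ≤ R → |s| ≤ R → ∀ x ∈ X, ∀ t ∈ Tset,
      pucciMinus lam Lam (M - N) - gam * ‖P - Q‖ - ω R (max (s - r) 0)
          ≤ F M P r x t - F N Q s x t ∧
      F M P r x t - F N Q s x t
          ≤ pucciPlus lam Lam (M - N) + gam * ‖P - Q‖ + ω R (max (r - s) 0)

noncomputable def supConv {d : ℕ} (Ω : Set (Eucl d)) (u : Eucl d → ℝ) (ε : ℝ) (x : Eucl d) : ℝ :=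
  sSup ((fun y => u y - ‖x - y‖ ^ 2 / (2 * ε)) '' closure Ω)

noncomputable def infConv {d : ℕ} (Ω : Set (Eucl d)) (u : Eucl d → ℝ) (ε : ℝ) (x : Eucl d) : ℝ :=
  sInf ((fun y => u y + ‖x - y‖ ^ 2 / (2 * ε)) '' closure Ω)

noncomputable def supNorm {d : ℕ} (Ω : Set (Eucl d)) (u : Eucl d → ℝ) : ℝ :=
  sSup ((fun y => |u y|) '' closure Ω)

def RotheStep {d : ℕ} (Ω : Set (Eucl d))
    (F : Matrix (Fin d) (Fin d) ℝ → Eucl d → ℝ → Eucl d → ℝ → ℝ)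
    (h : ℝ) (m : ℕ) (zprev znext : Eucl d → ℝ) : Prop :=
  ContinuousOn znext (closure Ω) ∧
  ViscSol Ω (fun M P r x => F M P r x ((m + 1) * h) + r / h) (fun x => zprev x / h) znext ∧
  ∀ x ∈ frontier Ω, znext x = 0

noncomputable def rotheInterp {d : ℕ} (z : ℕ → Eucl d → ℝ) (h : ℝ) (x : Eucl d) (t : ℝ) : ℝ :=
  ((⌊t / h⌋₊ + 1 : ℝ) * h - t) / h * z ⌊t / h⌋₊ x + (t - (⌊t / h⌋₊ : ℝ) * h) / h * z (⌊t / h⌋₊ + 1) x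

def HasSmoothBoundary {d : ℕ} (Ω : Set (Eucl d)) : Prop :=
  ∃ f : Eucl d → ℝ, ContDiff ℝ (⊤ : ℕ∞) f ∧ Ω = {x | f x < 0} ∧ ∀ x ∈ frontier Ω, fderiv ℝ f x ≠ 0

def C21 {d : ℕ} (φ : Eucl d → ℝ → ℝ) : Prop :=
  (∀ t, ContDiff ℝ 2 fun x => φ x t) ∧
  (∀ x, ContDiff ℝ 1 fun t => φ x t) ∧
  Continuous (fun p : Eucl d × ℝ => φ p.1 p.2) ∧
  Continuous (fun p : Eucl d × ℝ => hessAt (fun x => φ x p.2) p.1) ∧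
  Continuous (fun p : Eucl d × ℝ => gradAt (fun x => φ x p.2) p.1) ∧
  Continuous (fun p : Eucl d × ℝ => deriv (φ p.1) p.2)

def ParabolicViscSubsol {d : ℕ} (Ω : Set (Eucl d)) (T : ℝ)
    (F : Matrix (Fin d) (Fin d) ℝ → Eucl d → ℝ → Eucl d → ℝ → ℝ)
    (u : Eucl d × ℝ → ℝ) : Prop :=
  ∀ φ : Eucl d → ℝ → ℝ, C21 φ → ∀ ε > (0:ℝ),
    (∀ x ∈ closure Ω, ∀ t ∈ Icc (0:ℝ) T,
      ε ≤ deriv (φ x) t +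
        F (hessAt (fun y => φ y t) x) (gradAt (fun y => φ y t) x) (φ x t) x t) →
    ¬ ∃ p ∈ Ω ×ˢ Ioc (0:ℝ) T,
        IsLocalMaxOn (fun q : Eucl d × ℝ => u q - φ q.1 q.2) (Ω ×ˢ Ioc (0:ℝ) T) p ∧
        u p - φ p.1 p.2 = 0

def ParabolicViscSupersol {d : ℕ} (Ω : Set (Eucl d)) (T : ℝ)
    (F : Matrix (Fin d) (Fin d) ℝ → Eucl d → ℝ → Eucl d → ℝ → ℝ)
    (u : Eucl d × ℝ → ℝ) : Prop :=
  ∀ φ : Eucl d → ℝ → ℝ, C21 φ → ∀ ε > (0:ℝ),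
    (∀ x ∈ closure Ω, ∀ t ∈ Icc (0:ℝ) T,
      deriv (φ x) t +
        F (hessAt (fun y => φ y t) x) (gradAt (fun y => φ y t) x) (φ x t) x t ≤ -ε) →
    ¬ ∃ p ∈ Ω ×ˢ Ioc (0:ℝ) T,
        IsLocalMinOn (fun q : Eucl d × ℝ => u q - φ q.1 q.2) (Ω ×ˢ Ioc (0:ℝ) T) p ∧
        u p - φ p.1 p.2 = 0


/-! ### Proximal map and Moreau envelope of a convex function -/

/-- A function with an affine minorant touching it at every point is convex, in the form of
Jensen's inequality along a segment. -/
lemma le_segment_of_subgradient {d : ℕ} {f : Eucl d → ℝ}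
    (hsub : ∀ x, ∃ q : Eucl d, ∀ w, f x + ⟪q, w - x⟫ ≤ f w)
    (x w : Eucl d) {t : ℝ} (ht0 : 0 ≤ t) (ht1 : t ≤ 1) :
    f (x + t • (w - x)) ≤ (1 - t) * f x + t * f w := by
  obtain ⟨q, hq⟩ := hsub (x + t • (w - x))
  have h1 := hq x
  have h2 := hq w
  have e1 : x - (x + t • (w - x)) = (-t) • (w - x) := by module
  have e2 : w - (x + t • (w - x)) = (1 - t) • (w - x) := by module
  rw [e1, inner_smul_right] at h1
  rw [e2, inner_smul_right] at h2
  nlinarith [mul_le_mul_of_nonneg_left h1 (sub_nonneg.2 ht1), mul_le_mul_of_nonneg_left h2 ht0]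

/-- The proximal map: `J y` minimises `f + ‖· - y‖² / 2`, equivalently `y - J y` is a
subgradient of `f` at `J y`. -/
lemma exists_prox {d : ℕ} {f : Eucl d → ℝ} (hc : Continuous f)
    (hsub : ∀ x, ∃ q : Eucl d, ∀ w, f x + ⟪q, w - x⟫ ≤ f w) :
    ∃ J : Eucl d → Eucl d, ∀ y w, f (J y) + ⟪y - J y, w - J y⟫ ≤ f w := by
  have key : ∀ y : Eucl d, ∃ x : Eucl d, ∀ w, f x + ⟪y - x, w - x⟫ ≤ f w := by
    intro y
    obtain ⟨q, hq⟩ := hsub 0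
    have hcoer : Tendsto (fun x : Eucl d => f x + ‖x - y‖ ^ 2 / 2) (cocompact _) atTop := by
      have hn : Tendsto (fun x : Eucl d => ‖x‖) (cocompact _) atTop :=
        tendsto_norm_cocompact_atTop
      -- `‖x - y‖² / 2 + ⟪q, x⟫ ≥ ‖x‖² / 2 - (‖y‖ + ‖q‖) ‖x‖ ≥ ‖x‖ - const`
      have : Tendsto (fun x : Eucl d => ‖x‖ + (f 0 - (1 + ‖y‖ + ‖q‖) ^ 2)) (cocompact _) atTop :=
        tendsto_atTop_add_const_right _ _ hn
      refine tendsto_atTop_mono (fun x => ?_) this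
      have h1 := hq x
      rw [sub_zero] at h1
      have h2 : -(‖q‖ * ‖x‖) ≤ ⟪q, x⟫ := neg_le_of_abs_le (abs_real_inner_le_norm q x)
      have h3 : ‖x - y‖ ^ 2 = ‖x‖ ^ 2 - 2 * ⟪x, y⟫ + ‖y‖ ^ 2 := norm_sub_sq_real x y
      have h4 : ⟪x, y⟫ ≤ ‖x‖ * ‖y‖ := real_inner_le_norm x y
      nlinarith [sq_nonneg (‖x‖ - (1 + ‖y‖ + ‖q‖)), sq_nonneg (1 + ‖y‖ + ‖q‖), sq_nonneg ‖y‖]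
    obtain ⟨x, hx⟩ := Continuous.exists_forall_le (by fun_prop) hcoer
    refine ⟨x, fun w => ?_⟩
    have hle : ∀ t ∈ Ioc (0:ℝ) 1, f x + ⟪y - x, w - x⟫ - t * (‖w - x‖ ^ 2 / 2) ≤ f w := by
      rintro t ⟨ht0, ht1⟩
      have h1 := hx (x + t • (w - x))
      have h2 := le_segment_of_subgradient hsub x w ht0.le ht1
      have e : x + t • (w - x) - y = t • (w - x) - (y - x) := by module
      have e' : ‖x - y‖ = ‖y - x‖ := norm_sub_rev _ _
      have h3 : ‖x + t • (w - x) - y‖ ^ 2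
          = t ^ 2 * ‖w - x‖ ^ 2 - 2 * (t * ⟪y - x, w - x⟫) + ‖y - x‖ ^ 2 := by
        rw [e, norm_sub_sq_real, norm_smul, mul_pow, Real.norm_eq_abs, sq_abs, inner_smul_left,
          real_inner_comm]
        simp
      rw [h3, e'] at h1
      have h4 : t * (f x + ⟪y - x, w - x⟫ - t * (‖w - x‖ ^ 2 / 2)) ≤ t * f w := by nlinarith
      exact le_of_mul_le_mul_left h4 ht0
    have hlim : Tendsto (fun t : ℝ => f x + ⟪y - x, w - x⟫ - t * (‖w - x‖ ^ 2 / 2))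
        (𝓝[>] 0) (𝓝 (f x + ⟪y - x, w - x⟫ - 0 * (‖w - x‖ ^ 2 / 2))) := by
      refine (Continuous.tendsto ?_ 0).mono_left nhdsWithin_le_nhds
      fun_prop
    have := le_of_tendsto hlim (by
      filter_upwards [Ioc_mem_nhdsGT (zero_lt_one' ℝ)] with t ht using hle t ht)
    simpa using this
  choose J hJ using key
  exact ⟨J, hJ⟩

section Prox

variable {d : ℕ} {f : Eucl d → ℝ} {J : Eucl d → Eucl d}

lemma prox_firmly (hJ : ∀ y w, f (J y) + ⟪y - J y, w - J y⟫ ≤ f w) (y y' : Eucl d) :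
    ‖J y - J y'‖ ^ 2 ≤ ⟪J y - J y', y - y'⟫ := by
  have h1 := hJ y (J y')
  have h2 := hJ y' (J y)
  have e1 : ⟪y - J y, J y' - J y⟫ = - ⟪J y - J y', y - J y⟫ := by
    rw [← inner_neg_left, real_inner_comm, neg_sub]
  rw [e1] at h1
  rw [real_inner_comm] at h2
  have e2 : ⟪J y - J y', y - y'⟫
      = ⟪J y - J y', y - J y⟫ - ⟪J y - J y', y' - J y'⟫ + ‖J y - J y'‖ ^ 2 := by
    rw [← real_inner_self_eq_norm_sq, ← inner_sub_right, ← inner_add_right]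
    congr 1
    module
  linarith

lemma prox_lipschitz (hJ : ∀ y w, f (J y) + ⟪y - J y, w - J y⟫ ≤ f w) :
    LipschitzWith 1 J := by
  refine LipschitzWith.of_dist_le_mul fun y y' => ?_
  rw [dist_eq_norm, dist_eq_norm, NNReal.coe_one, one_mul]
  have h1 := prox_firmly hJ y y'
  have h2 : ⟪J y - J y', y - y'⟫ ≤ ‖J y - J y'‖ * ‖y - y'‖ := real_inner_le_norm _ _
  by_contra hlt
  push Not at hlt
  have := norm_nonneg (y - y')
  nlinarith

/-- The proximal map inverts `x ↦ x + ∂f(x)`. -/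
lemma prox_add_subgradient (hJ : ∀ y w, f (J y) + ⟪y - J y, w - J y⟫ ≤ f w) {x q : Eucl d}
    (hq : ∀ w, f x + ⟪q, w - x⟫ ≤ f w) : J (x + q) = x := by
  have h1 := hJ (x + q) x
  have h2 := hq (J (x + q))
  have e : ⟪x + q - J (x + q), x - J (x + q)⟫
      = ‖x - J (x + q)‖ ^ 2 - ⟪q, J (x + q) - x⟫ := by
    rw [← real_inner_self_eq_norm_sq, sub_eq_add_neg _ ⟪q, _⟫, ← inner_neg_right, neg_sub,
      ← inner_add_left]
    congr 1
    module
  rw [e] at h1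
  have : ‖x - J (x + q)‖ = 0 := by
    have := sq_nonneg ‖x - J (x + q)‖
    have h0 : ‖x - J (x + q)‖ ^ 2 = 0 := by linarith
    exact pow_eq_zero_iff (two_ne_zero) |>.1 h0
  rw [norm_eq_zero, sub_eq_zero] at this
  exact this.symm

/-- The Moreau envelope of `f`, expressed through its proximal map `J`. -/
def moreau {d : ℕ} (f : Eucl d → ℝ) (J : Eucl d → Eucl d) (y : Eucl d) : ℝ :=
  f (J y) + ‖y - J y‖ ^ 2 / 2

lemma moreau_add_le (hJ : ∀ y w, f (J y) + ⟪y - J y, w - J y⟫ ≤ f w) (y m : Eucl d) :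
    moreau f J (y + m) ≤ moreau f J y + ⟪y - J y, m⟫ + ‖m‖ ^ 2 / 2 := by
  have h1 := hJ (y + m) (J y)
  unfold moreau
  have e1 : ‖y + m - J y‖ ^ 2 = ‖y - J y‖ ^ 2 + 2 * ⟪y - J y, m⟫ + ‖m‖ ^ 2 := by
    rw [← norm_add_sq_real]; congr 2; module
  have e2 : ‖y + m - J y‖ ^ 2 = ‖y + m - J (y + m)‖ ^ 2
      - 2 * ⟪y + m - J (y + m), J y - J (y + m)⟫ + ‖J y - J (y + m)‖ ^ 2 := by
    rw [← norm_sub_sq_real]; congr 2; module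
  nlinarith [sq_nonneg ‖J y - J (y + m)‖]

lemma moreau_hasFDerivAt (hJ : ∀ y w, f (J y) + ⟪y - J y, w - J y⟫ ≤ f w) (y : Eucl d) :
    HasFDerivAt (moreau f J) (innerSL ℝ (y - J y)) y := by
  rw [hasFDerivAt_iff_isLittleO_nhds_zero]
  have hO : (fun m => moreau f J (y + m) - moreau f J y - innerSL ℝ (y - J y) m)
      =O[𝓝 0] fun m : Eucl d => ‖m‖ ^ 2 := by
    refine IsBigO.of_bound 1 (Eventually.of_forall fun m => ?_)
    rw [innerSL_apply_apply, Real.norm_eq_abs, norm_pow, norm_norm, one_mul, abs_le]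
    have h1 := moreau_add_le hJ y m
    have h2 := moreau_add_le hJ (y + m) (-m)
    rw [add_neg_cancel_right, norm_neg, inner_neg_right] at h2
    have h3 : ⟪y + m - J (y + m), m⟫
        = ⟪y - J y, m⟫ + ‖m‖ ^ 2 - ⟪J (y + m) - J y, m⟫ := by
      rw [← real_inner_self_eq_norm_sq, ← inner_add_left, ← inner_sub_left]
      congr 1
      module
    have h4 : ⟪J (y + m) - J y, m⟫ ≤ ‖m‖ ^ 2 := by
      have h5 : ‖J (y + m) - J y‖ ≤ ‖m‖ := by
        have := (prox_lipschitz hJ).dist_le_mul (y + m) y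
        simpa [dist_eq_norm] using this
      have h6 := real_inner_le_norm (J (y + m) - J y) m
      nlinarith [norm_nonneg m]
    have := sq_nonneg ‖m‖
    constructor <;> linarith
  refine hO.trans_isLittleO ?_
  have := isLittleO_norm_pow_id (E' := Eucl d) one_lt_two
  simpa using this

lemma moreau_hasFDerivAt_gradient {A : Eucl d →L[ℝ] Eucl d} {y : Eucl d} (hA : HasFDerivAt J A y) :
    HasFDerivAt (fun y' => innerSL ℝ (y' - J y'))
      ((innerSL ℝ (E := Eucl d)).comp (ContinuousLinearMap.id ℝ (Eucl d) - A)) y :=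
  (innerSL ℝ (E := Eucl d)).hasFDerivAt.comp y ((hasFDerivAt_id y).sub hA)

/-- The derivative of the proximal map is symmetric, being a second derivative up to the
identity. -/
lemma prox_fderiv_symm (hJ : ∀ y w, f (J y) + ⟪y - J y, w - J y⟫ ≤ f w)
    {A : Eucl d →L[ℝ] Eucl d} {y : Eucl d} (hA : HasFDerivAt J A y) (v w : Eucl d) :
    ⟪A v, w⟫ = ⟪v, A w⟫ := by
  have := second_derivative_symmetric_of_eventually (𝕜 := ℝ)
    (Eventually.of_forall fun y' => moreau_hasFDerivAt hJ y')
    (moreau_hasFDerivAt_gradient hA) v w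
  simp only [ContinuousLinearMap.comp_apply, sub_apply,
    ContinuousLinearMap.id_apply, innerSL_apply_apply, inner_sub_left] at this
  have e1 := real_inner_comm v w
  have e2 := real_inner_comm v (A w)
  linarith

lemma moreau_taylor (hJ : ∀ y w, f (J y) + ⟪y - J y, w - J y⟫ ≤ f w)
    {A : Eucl d →L[ℝ] Eucl d} {y : Eucl d} (hA : HasFDerivAt J A y) :
    (fun m => moreau f J (y + m) - moreau f J y - ⟪y - J y, m⟫ - ⟪m - A m, m⟫ / 2)
      =o[𝓝 0] fun m : Eucl d => ‖m‖ ^ 2 := by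
  rw [isLittleO_iff]
  intro c hc
  have hlin := (hasFDerivAt_iff_isLittleO_nhds_zero.1 hA)
  rw [isLittleO_iff] at hlin
  obtain ⟨r, hr, hball⟩ := Metric.eventually_nhds_iff_ball.1 (hlin hc)
  filter_upwards [Metric.ball_mem_nhds (0 : Eucl d) hr] with m hm
  set g : Eucl d → ℝ := fun m => moreau f J (y + m) - ⟪y - J y, m⟫ - ⟪m - A m, m⟫ / 2 with hg
  have hder : ∀ m', HasFDerivAt g
      (-(innerSL ℝ (J (y + m') - J y - A m'))) m' := by
    intro m'
    have h1 : HasFDerivAt (fun m => moreau f J (y + m)) (innerSL ℝ (y + m' - J (y + m'))) m' := by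
      have := (moreau_hasFDerivAt hJ (y + m')).comp m' ((hasFDerivAt_id m').const_add y)
      simpa using! this
    have h2 : HasFDerivAt (fun m => ⟪y - J y, m⟫) (innerSL ℝ (y - J y)) m' :=
      (innerSL ℝ (y - J y)).hasFDerivAt
    have h3 : HasFDerivAt (fun m => ⟪m - A m, m⟫ / 2) (innerSL ℝ (m' - A m')) m' := by
      have h := (((hasFDerivAt_id m').sub (A.hasFDerivAt (x := m'))).inner ℝ
        (hasFDerivAt_id m')).mul_const (1 / 2 : ℝ)
      simp only [mul_one_div] at h
      refine h.congr_fderiv ?_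
      ext k
      have hs := prox_fderiv_symm hJ hA k m'
      have hs' := real_inner_comm k m'
      have hs'' := real_inner_comm k (A m')
      simp [inner_sub_left, fderivInnerCLM_apply]
      linarith
    refine ((h1.sub h2).sub h3).congr_fderiv ?_
    ext k
    simp only [sub_apply, neg_apply, innerSL_apply_apply, inner_sub_left, inner_add_left]
    ring
  have hb : ∀ m' ∈ closedBall (0 : Eucl d) ‖m‖,
      ‖-(innerSL ℝ (J (y + m') - J y - A m'))‖ ≤ c * ‖m‖ := by
    intro m' hm'
    rw [norm_neg, innerSL_apply_norm]
    have hm'' : ‖m'‖ ≤ ‖m‖ := by simpa using hm'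
    have h1 := hball m' (by
      rw [mem_ball_zero_iff] at hm ⊢
      exact hm''.trans_lt hm)
    exact h1.trans (by gcongr)
  have := (convex_closedBall (0 : Eucl d) ‖m‖).norm_image_sub_le_of_norm_hasFDerivWithin_le
    (fun m' _ => (hder m').hasFDerivWithinAt) hb (mem_closedBall_self (norm_nonneg _))
    (by simp : m ∈ closedBall (0 : Eucl d) ‖m‖)
  rw [norm_pow, norm_norm]
  calc _ = ‖g m - g 0‖ := by
          simp [hg]; ring_nf
    _ ≤ c * ‖m‖ * ‖m - 0‖ := this
    _ = c * ‖m‖ ^ 2 := by rw [sub_zero]; ring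

end Prox

/-! ### Alexandrov's theorem -/

/-- `f` has the second-order expansion with gradient `p` and (symmetric) Hessian `B` at `x`;
nothing is assumed about `f` near `x`. -/
def HasTaylorTwo {d : ℕ} (f : Eucl d → ℝ) (p : Eucl d) (B : Eucl d →L[ℝ] Eucl d)
    (x : Eucl d) : Prop :=
  (∀ v w, ⟪B v, w⟫ = ⟪v, B w⟫) ∧
  (fun k => f (x + k) - f x - ⟪p, k⟫ - ⟪B k, k⟫ / 2) =o[𝓝 0] fun k : Eucl d => ‖k‖ ^ 2

/-- If the proximal map has an invertible derivative at `y`, then `k = J (y + m) - J y` controls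
`m`, even for `m` not known to be small: monotonicity of `J` along the ray through `m` prevents
`J` from returning close to `J y`. -/
lemma prox_expanding {d : ℕ} {f : Eucl d → ℝ} {J : Eucl d → Eucl d}
    (hJ : ∀ y w, f (J y) + ⟪y - J y, w - J y⟫ ≤ f w)
    {y : Eucl d} (A : Eucl d ≃L[ℝ] Eucl d) (hA : HasFDerivAt J (A : Eucl d →L[ℝ] Eucl d) y) :
    ∃ C > 0, ∃ s > 0, ∀ m, ‖J (y + m) - J y‖ < s → ‖m‖ ≤ C * ‖J (y + m) - J y‖ := by
  obtain ⟨K, hK⟩ : ∃ K : ℝ, 0 < K ∧ ∀ m, ‖m‖ ≤ K * ‖A m‖ := by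
    refine ⟨‖(A.symm : Eucl d →L[ℝ] Eucl d)‖ + 1, by positivity, fun m => ?_⟩
    have := (A.symm : Eucl d →L[ℝ] Eucl d).le_opNorm (A m)
    simp only [ContinuousLinearEquiv.coe_coe, ContinuousLinearEquiv.symm_apply_apply] at this
    nlinarith [norm_nonneg (A m)]
  obtain ⟨hK0, hK⟩ := hK
  have hlin := (hasFDerivAt_iff_isLittleO_nhds_zero.1 hA)
  rw [isLittleO_iff] at hlin
  obtain ⟨r, hr, hball⟩ := Metric.eventually_nhds_iff_ball.1
    (hlin (show 0 < 1 / (2 * K) by positivity))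
  -- near `y` the map expands lengths by at least `1 / (2 K)`
  have hloc : ∀ m, ‖m‖ < r → ‖m‖ ≤ 2 * K * ‖J (y + m) - J y‖ := by
    intro m hm
    have h1 := hball m (by simpa using hm)
    have h2 := hK m
    have h3 : ‖A m‖ ≤ ‖J (y + m) - J y‖ + ‖J (y + m) - J y - A m‖ := by
      have := norm_sub_le (J (y + m) - J y) (J (y + m) - J y - A m)
      simpa using this
    simp only [ContinuousLinearEquiv.coe_coe] at h1
    have h4 : K * (1 / (2 * K) * ‖m‖) = ‖m‖ / 2 := by field_simp
    have h5 : K * ‖A m‖ ≤ K * ‖J (y + m) - J y‖ + K * (1 / (2 * K) * ‖m‖) := by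
      rw [← mul_add]; gcongr; linarith
    linarith
  refine ⟨2 * K, by positivity, r / 2 / (2 * K) ^ 2, by positivity, fun m hm => ?_⟩
  by_cases hmr : ‖m‖ < r
  · exact hloc m hmr
  exfalso
  push Not at hmr
  have hm0 : 0 < ‖m‖ := hr.trans_le hmr
  set t : ℝ := r / 2 / ‖m‖ with ht
  have ht0 : 0 < t := by positivity
  have ht1 : t < 1 := by rw [ht, div_lt_one hm0]; linarith
  have hnm : ‖t • m‖ = r / 2 := by
    rw [norm_smul, Real.norm_of_nonneg ht0.le, ht]; field_simp
  have h1 := hloc (t • m) (by rw [hnm]; linarith)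
  have h2 := prox_firmly hJ (y + t • m) y
  have h3 := prox_firmly hJ (y + m) (y + t • m)
  have e1 : y + t • m - y = t • m := by module
  have e2 : y + m - (y + t • m) = (1 - t) • m := by module
  rw [e1, inner_smul_right] at h2
  rw [e2, inner_smul_right] at h3
  have h4 : 0 ≤ ⟪J (y + m) - J (y + t • m), m⟫ := by
    have : 0 ≤ (1 - t) * ⟪J (y + m) - J (y + t • m), m⟫ := (sq_nonneg _).trans h3
    exact nonneg_of_mul_nonneg_right this (by linarith)
  have h5 : ⟪J (y + m) - J (y + t • m), m⟫ = ⟪J (y + m) - J y, m⟫ - ⟪J (y + t • m) - J y, m⟫ := by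
    rw [← inner_sub_left]; congr 1; module
  have h6 : t * ⟪J (y + m) - J y, m⟫ ≤ ‖J (y + m) - J y‖ * (r / 2) := by
    rw [← inner_smul_right, ← hnm]; exact real_inner_le_norm _ _
  have h7 : t * ⟪J (y + t • m) - J y, m⟫ ≤ t * ⟪J (y + m) - J y, m⟫ :=
    mul_le_mul_of_nonneg_left (by linarith) ht0.le
  rw [hnm] at h1
  have h8 : (r / 2) ^ 2 ≤ (2 * K) ^ 2 * ‖J (y + t • m) - J y‖ ^ 2 := by
    rw [← mul_pow]; gcongr
  rw [lt_div_iff₀ (by positivity)] at hm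
  have h9 : (2 * K) ^ 2 * ‖J (y + t • m) - J y‖ ^ 2 ≤ (2 * K) ^ 2 * (‖J (y + m) - J y‖ * (r / 2)) := by
    gcongr; linarith
  have h10 : ‖J (y + m) - J y‖ * (2 * K) ^ 2 * (r / 2) < r / 2 * (r / 2) := by gcongr
  nlinarith

/-- Where the proximal map has an invertible derivative `A`, the function `f` is twice
differentiable with Hessian `A⁻¹ - 1`. -/
lemma hasTaylorTwo_of_prox {d : ℕ} {f : Eucl d → ℝ} {J : Eucl d → Eucl d}
    (hsub : ∀ x, ∃ q : Eucl d, ∀ w, f x + ⟪q, w - x⟫ ≤ f w)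
    (hJ : ∀ y w, f (J y) + ⟪y - J y, w - J y⟫ ≤ f w)
    {y : Eucl d} (A : Eucl d ≃L[ℝ] Eucl d) (hA : HasFDerivAt J (A : Eucl d →L[ℝ] Eucl d) y) :
    HasTaylorTwo f (y - J y)
      ((A.symm : Eucl d →L[ℝ] Eucl d) - ContinuousLinearMap.id ℝ (Eucl d)) (J y) := by
  have hsymm : ∀ v w, ⟪A.symm v, w⟫ = ⟪v, A.symm w⟫ := by
    intro v w
    have := prox_fderiv_symm hJ hA (A.symm v) (A.symm w)
    simp only [ContinuousLinearEquiv.coe_coe, ContinuousLinearEquiv.apply_symm_apply] at this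
    exact this.symm
  refine ⟨fun v w => ?_, ?_⟩
  · simp [inner_sub_left, inner_sub_right, hsymm]
  -- `J (y + m k) = J y + k`
  choose q hq using hsub
  set m : Eucl d → Eucl d := fun k => J y + k + q (J y + k) - y with hm
  have hJm : ∀ k, J (y + m k) = J y + k := by
    intro k
    have : y + m k = J y + k + q (J y + k) := by rw [hm]; module
    rw [this]
    exact prox_add_subgradient hJ (hq _)
  obtain ⟨C, hC, s, hs, hexp⟩ := prox_expanding hJ A hA
  have hmO : m =O[𝓝 0] fun k : Eucl d => k := by
    refine IsBigO.of_bound C ?_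
    filter_upwards [Metric.ball_mem_nhds (0 : Eucl d) hs] with k hk
    have := hexp (m k)
    rw [hJm, add_sub_cancel_left] at this
    exact this (by simpa using hk)
  have hm0 : Tendsto m (𝓝 0) (𝓝 0) := hmO.trans_tendsto tendsto_id
  set ρ : Eucl d → Eucl d := fun k => k - A (m k) with hρ
  have hρo : ρ =o[𝓝 0] fun k : Eucl d => k := by
    have h1 := ((hasFDerivAt_iff_isLittleO_nhds_zero.1 hA).comp_tendsto hm0).trans_isBigO hmO
    refine h1.congr_left fun k => ?_
    simp [hJm, hρ]
  have htay : (fun k => moreau f J (y + m k) - moreau f J y - ⟪y - J y, m k⟫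
      - ⟪m k - A (m k), m k⟫ / 2) =o[𝓝 0] fun k : Eucl d => ‖k‖ ^ 2 := by
    have h1 := (moreau_taylor hJ hA).comp_tendsto hm0
    exact h1.trans_isBigO (hmO.norm_norm.pow 2)
  have hr1 : (fun k => ⟪ρ k, m k⟫) =o[𝓝 0] fun k : Eucl d => ‖k‖ ^ 2 := by
    have : (fun k => ‖ρ k‖ * ‖m k‖) =o[𝓝 0] fun k : Eucl d => ‖k‖ * ‖k‖ :=
      hρo.norm_norm.mul_isBigO hmO.norm_norm
    simp only [← pow_two] at this
    refine IsBigO.trans_isLittleO (IsBigO.of_bound 1 (Eventually.of_forall fun k => ?_)) this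
    simpa using abs_real_inner_le_norm (ρ k) (m k)
  have hr2 : (fun k => ⟪A.symm (ρ k), k⟫) =o[𝓝 0] fun k : Eucl d => ‖k‖ ^ 2 := by
    have h0 : (fun k => A.symm (ρ k)) =o[𝓝 0] fun k : Eucl d => k :=
      ((A.symm : Eucl d →L[ℝ] Eucl d).isBigO_comp ρ _).trans_isLittleO hρo
    have : (fun k => ‖A.symm (ρ k)‖ * ‖k‖) =o[𝓝 0] fun k : Eucl d => ‖k‖ * ‖k‖ :=
      h0.norm_norm.mul_isBigO (isBigO_refl _ _)
    simp only [← pow_two] at this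
    refine IsBigO.trans_isLittleO (IsBigO.of_bound 1 (Eventually.of_forall fun k => ?_)) this
    simpa using abs_real_inner_le_norm (A.symm (ρ k)) k
  refine ((htay.add (hr1.const_mul_left (1 / 2))).sub (hr2.const_mul_left (1 / 2))).congr_left
    fun k => ?_
  -- algebra: substitute `A (m k) = k - ρ k` and `A⁻¹ k = m k + A⁻¹ (ρ k)`
  have e1 : A (m k) = k - ρ k := by simp [hρ]
  have e2 : A.symm k = m k + A.symm (ρ k) := by simp [hρ]
  have e3 : ‖y + m k - (J y + k)‖ ^ 2 = ‖y - J y‖ ^ 2 + 2 * ⟪y - J y, m k - k⟫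
      + (‖m k‖ ^ 2 - 2 * ⟪m k, k⟫ + ‖k‖ ^ 2) := by
    rw [← norm_sub_sq_real, ← norm_add_sq_real]; congr 2; module
  have e4 := real_inner_comm (m k) k
  simp only [moreau, hJm, e1, e3, sub_apply, ContinuousLinearEquiv.coe_coe,
    ContinuousLinearMap.id_apply, e2, inner_sub_left, inner_sub_right, inner_add_left,
    real_inner_self_eq_norm_sq] at e4 ⊢
  linarith

/-- A Lipschitz map of `ℝᵈ` sends Lebesgue null sets to null sets. -/
lemma volume_image_eq_zero {d : ℕ} {g : Eucl d → Eucl d} {K : NNReal} {s : Set (Eucl d)}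
    (hg : LipschitzOnWith K g s) (hs : volume s = 0) : volume (g '' s) = 0 := by
  have hH : (Measure.hausdorffMeasure (Module.finrank ℝ (Eucl d) : ℝ) :
      Measure (Eucl d)).IsAddHaarMeasure :=
    MeasureTheory.isAddHaarMeasure_hausdorffMeasure
  have h1 := hg.hausdorffMeasure_image_le (d := (Module.finrank ℝ (Eucl d) : ℝ)) (by positivity)
  rw [(Measure.absolutelyContinuous_isAddHaarMeasure
    (Measure.hausdorffMeasure (Module.finrank ℝ (Eucl d) : ℝ)) volume) hs, mul_zero] at h1
  exact Measure.absolutelyContinuous_isAddHaarMeasure _ _ (le_antisymm h1 bot_le)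

/-- Alexandrov's theorem: a convex function is twice differentiable almost everywhere. By
Rademacher's theorem the proximal map `J` is differentiable off a null set, whose image is null,
and by Sard's lemma the image of the points with singular derivative is null as well. -/
lemma alexandrov {d : ℕ} {f : Eucl d → ℝ} (hc : Continuous f)
    (hsub : ∀ x, ∃ q : Eucl d, ∀ w, f x + ⟪q, w - x⟫ ≤ f w) :
    ∀ᵐ x : Eucl d, ∃ p B, HasTaylorTwo f p B x := by
  obtain ⟨J, hJ⟩ := exists_prox hc hsub
  have hlip := prox_lipschitz hJ
  set N : Set (Eucl d) := {y | ¬ DifferentiableAt ℝ J y}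
  set S : Set (Eucl d) := {y | DifferentiableAt ℝ J y ∧ (fderiv ℝ J y).det = 0}
  have hN : volume (J '' N) = 0 :=
    volume_image_eq_zero hlip.lipschitzOnWith (hlip.ae_differentiableAt (μ := volume))
  have hS : volume (J '' S) = 0 :=
    addHaar_image_eq_zero_of_det_fderivWithin_eq_zero volume
      (fun y hy => hy.1.hasFDerivAt.hasFDerivWithinAt) (fun y hy => hy.2)
  have hNS : ∀ᵐ x : Eucl d, x ∉ J '' N ∧ x ∉ J '' S :=
    (measure_eq_zero_iff_ae_notMem.1 hN).and (measure_eq_zero_iff_ae_notMem.1 hS)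
  filter_upwards [hNS] with x hx
  obtain ⟨q, hq⟩ := hsub x
  have hJx : J (x + q) = x := prox_add_subgradient hJ hq
  have hdiff : DifferentiableAt ℝ J (x + q) := by
    by_contra hn
    exact hx.1 ⟨x + q, hn, hJx⟩
  have hdet : (fderiv ℝ J (x + q)).det ≠ 0 := fun h0 => hx.2 ⟨x + q, ⟨hdiff, h0⟩, hJx⟩
  have := hasTaylorTwo_of_prox hsub hJ
    ((fderiv ℝ J (x + q)).toContinuousLinearEquivOfDetNeZero hdet) (y := x + q) (by
      simpa using hdiff.hasFDerivAt)
  rw [hJx] at this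
  exact ⟨_, _, this⟩

/-! ### Sup-convolutions and Jensen's lemma -/

/-- `f` is the sup-convolution `sup_{ξ ∈ K} (u ξ - c ‖· - ξ‖² / 2)` of `u`, with attained supremum,
plus `c ‖·‖² / 2`; the added term makes it a supremum of affine functions, hence convex. -/
def IsSupConvolution {d : ℕ} (K : Set (Eucl d)) (u : Eucl d → ℝ) (c : ℝ) (f : Eucl d → ℝ) : Prop :=
  (∀ x, ∃ ξ ∈ K, f x = u ξ - c / 2 * ‖x - ξ‖ ^ 2 + c / 2 * ‖x‖ ^ 2) ∧
  ∀ x, ∀ ξ ∈ K, u ξ - c / 2 * ‖x - ξ‖ ^ 2 + c / 2 * ‖x‖ ^ 2 ≤ f x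

lemma exists_isSupConvolution {d : ℕ} {K : Set (Eucl d)} (hK : IsCompact K) (hne : K.Nonempty)
    {u : Eucl d → ℝ} (hu : ContinuousOn u K) (c : ℝ) : ∃ f, IsSupConvolution K u c f := by
  have key : ∀ x : Eucl d, ∃ ξ ∈ K, ∀ η ∈ K,
      u η - c / 2 * ‖x - η‖ ^ 2 ≤ u ξ - c / 2 * ‖x - ξ‖ ^ 2 := by
    intro x
    obtain ⟨ξ, hξ, hmax⟩ := hK.exists_isMaxOn hne
      (hu.sub (show ContinuousOn (fun η => c / 2 * ‖x - η‖ ^ 2) K by fun_prop))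
    exact ⟨ξ, hξ, fun η hη => hmax hη⟩
  choose ξ hξ hmax using key
  refine ⟨fun x => u (ξ x) - c / 2 * ‖x - ξ x‖ ^ 2 + c / 2 * ‖x‖ ^ 2,
    fun x => ⟨ξ x, hξ x, rfl⟩, fun x η hη => ?_⟩
  have := hmax x η hη
  linarith

lemma IsSupConvolution.subgradient {d : ℕ} {K : Set (Eucl d)} {u : Eucl d → ℝ} {c : ℝ}
    {f : Eucl d → ℝ} (hf : IsSupConvolution K u c f) (x : Eucl d) :
    ∃ ξ ∈ K, ∀ w, f x + ⟪c • ξ, w - x⟫ ≤ f w := by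
  obtain ⟨ξ, hξ, hx⟩ := hf.1 x
  refine ⟨ξ, hξ, fun w => ?_⟩
  have h1 := hf.2 w ξ hξ
  rw [norm_sub_sq_real] at hx h1
  rw [inner_smul_left, inner_sub_right, real_inner_comm, real_inner_comm x ξ, hx]
  simp only [conj_trivial]
  linarith

lemma IsSupConvolution.le_add {d : ℕ} {K : Set (Eucl d)} {u : Eucl d → ℝ} {c R : ℝ}
    {f : Eucl d → ℝ} (hf : IsSupConvolution K u c f) (hc : 0 ≤ c) (hR : ∀ ξ ∈ K, ‖ξ‖ ≤ R)
    (x w : Eucl d) : f x ≤ f w + c * R * ‖x - w‖ := by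
  obtain ⟨ξ, hξ, hx⟩ := hf.subgradient x
  have h1 := hx w
  have h2 : ⟪c • ξ, x - w⟫ ≤ ‖c • ξ‖ * ‖x - w‖ := real_inner_le_norm _ _
  have h3 : ‖c • ξ‖ * ‖x - w‖ ≤ c * R * ‖x - w‖ := by
    rw [norm_smul, Real.norm_of_nonneg hc]
    gcongr
    exact hR ξ hξ
  have h4 : ⟪c • ξ, w - x⟫ = -⟪c • ξ, x - w⟫ := by rw [← inner_neg_right, neg_sub]
  linarith

lemma IsSupConvolution.continuous {d : ℕ} {K : Set (Eucl d)} {u : Eucl d → ℝ} {c R : ℝ}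
    {f : Eucl d → ℝ} (hf : IsSupConvolution K u c f) (hc : 0 ≤ c) (hR0 : 0 ≤ R)
    (hR : ∀ ξ ∈ K, ‖ξ‖ ≤ R) : Continuous f := by
  refine (LipschitzWith.of_le_add_mul (K := ⟨c * R, by positivity⟩) fun x w => ?_).continuous
  rw [dist_eq_norm]
  exact hf.le_add hc hR x w

/-- Slopes `p, p'` of the affine functions touching `f + g - c ‖·‖²` from above depend in a
Lipschitz way on the contact points. -/
lemma contact_slope_lipschitz {d : ℕ} {f g : Eucl d → ℝ} {c : ℝ} (hc : 0 < c)
    (hf : ∀ x, ∃ q : Eucl d, ∀ w, f x + ⟪q, w - x⟫ ≤ f w)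
    (hg : ∀ x, ∃ q : Eucl d, ∀ w, g x + ⟪q, w - x⟫ ≤ g w)
    {x x' p p' : Eucl d}
    (hx : ∀ w, f w + g w - c * ‖w‖ ^ 2 - ⟪p, w⟫ ≤ f x + g x - c * ‖x‖ ^ 2 - ⟪p, x⟫)
    (hx' : ∀ w, f w + g w - c * ‖w‖ ^ 2 - ⟪p', w⟫ ≤ f x' + g x' - c * ‖x'‖ ^ 2 - ⟪p', x'⟫) :
    ‖p - p'‖ ≤ 4 * c * ‖x - x'‖ := by
  obtain ⟨q₁, h₁⟩ := hf x'
  obtain ⟨q₂, h₂⟩ := hg x'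
  have hexp : ∀ k : Eucl d, ‖x' + k‖ ^ 2 = ‖x'‖ ^ 2 + 2 * ⟪x', k⟫ + ‖k‖ ^ 2 :=
    fun k => norm_add_sq_real _ k
  -- the paraboloid touching from below at `x'` must have slope `p'`
  have hslope : q₁ + q₂ - (2 * c) • x' = p' := by
    have hk : ∀ k, ⟪q₁ + q₂ - (2 * c) • x' - p', k⟫ ≤ c * ‖k‖ ^ 2 := by
      intro k
      have a1 := h₁ (x' + k)
      have a2 := h₂ (x' + k)
      have a3 := hx' (x' + k)
      rw [hexp, inner_add_right] at a3
      rw [add_sub_cancel_left] at a1 a2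
      simp only [inner_sub_left, inner_add_left, inner_smul_left, conj_trivial]
      linarith
    set s := q₁ + q₂ - (2 * c) • x' - p' with hs
    have := hk ((1 / (2 * c)) • s)
    rw [inner_smul_right, norm_smul, mul_pow, real_inner_self_eq_norm_sq, Real.norm_eq_abs,
      sq_abs] at this
    have e : c * ((1 / (2 * c)) ^ 2 * ‖s‖ ^ 2) = ‖s‖ ^ 2 * (1 / (4 * c)) := by field_simp; ring
    have e' : 1 / (2 * c) * ‖s‖ ^ 2 = 2 * (‖s‖ ^ 2 * (1 / (4 * c))) := by field_simp; ring
    rw [e, e'] at this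
    have h0 : ‖s‖ ^ 2 * (1 / (4 * c)) ≤ 0 := by linarith
    have h0' : ‖s‖ ^ 2 ≤ 0 := by
      by_contra hlt
      push Not at hlt
      have : 0 < ‖s‖ ^ 2 * (1 / (4 * c)) := by positivity
      linarith
    have : ‖s‖ = 0 := by nlinarith [norm_nonneg s]
    rw [norm_eq_zero, hs, sub_eq_zero] at this
    exact this
  have hlow : ∀ k, f x' + g x' - c * ‖x'‖ ^ 2 + ⟪p', k⟫ - c * ‖k‖ ^ 2
      ≤ f (x' + k) + g (x' + k) - c * ‖x' + k‖ ^ 2 := by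
    intro k
    have a1 := h₁ (x' + k)
    have a2 := h₂ (x' + k)
    rw [add_sub_cancel_left] at a1 a2
    rw [hexp, ← hslope]
    simp only [inner_sub_left, inner_add_left, inner_smul_left, conj_trivial]
    linarith
  set r := p' - p with hr
  have b1 := hlow ((1 / (2 * c)) • r)
  have b2 := hx (x' + (1 / (2 * c)) • r)
  have b3 := hx' x
  have b4 : ⟪r, x' - x⟫ + (1 / (2 * c)) * ‖r‖ ^ 2 ≤ c * ((1 / (2 * c)) ^ 2 * ‖r‖ ^ 2) := by
    have e1 : ‖(1 / (2 * c)) • r‖ ^ 2 = (1 / (2 * c)) ^ 2 * ‖r‖ ^ 2 := by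
      rw [norm_smul, mul_pow, Real.norm_eq_abs, sq_abs]
    have e2 : (1 / (2 * c)) * ‖r‖ ^ 2
        = ⟪p', (1 / (2 * c)) • r⟫ - ⟪p, (1 / (2 * c)) • r⟫ := by
      rw [← inner_sub_left, ← hr, inner_smul_right, real_inner_self_eq_norm_sq]
    rw [e2, ← e1]
    rw [inner_add_right] at b2
    have e3 : ⟪r, x' - x⟫ = ⟪p', x'⟫ - ⟪p', x⟫ - (⟪p, x'⟫ - ⟪p, x⟫) := by
      rw [hr, inner_sub_left, inner_sub_right, inner_sub_right]
    linarith
  have b5 : -(‖r‖ * ‖x' - x‖) ≤ ⟪r, x' - x⟫ := neg_le_of_abs_le (abs_real_inner_le_norm _ _)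
  have e : c * ((1 / (2 * c)) ^ 2 * ‖r‖ ^ 2) = ‖r‖ ^ 2 / (4 * c) := by field_simp; ring
  have e' : 1 / (2 * c) * ‖r‖ ^ 2 = 2 * (‖r‖ ^ 2 / (4 * c)) := by field_simp; ring
  rw [e, e'] at b4
  have b6 : ‖r‖ ^ 2 / (4 * c) ≤ ‖r‖ * ‖x' - x‖ := by linarith
  rw [div_le_iff₀ (by positivity)] at b6
  rw [norm_sub_rev p p', norm_sub_rev x x', ← hr]
  by_contra hlt
  push Not at hlt
  have : 0 ≤ 4 * c * ‖x' - x‖ := by positivity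
  nlinarith

/-- Jensen's lemma: arbitrarily small linear perturbations of `f + g - c ‖·‖²` attain their maximum
at a point where both convex functions `f` and `g` are twice differentiable. The slopes of all
perturbations fill a ball and depend in a Lipschitz way on the maximum points, so these cannot all
lie in the exceptional null set of Alexandrov's theorem. -/
lemma jensen {d : ℕ} {f g : Eucl d → ℝ} {c L : ℝ} (hc : 0 < c)
    (hfc : Continuous f) (hgc : Continuous g)
    (hf : ∀ x, ∃ q : Eucl d, ∀ w, f x + ⟪q, w - x⟫ ≤ f w)
    (hg : ∀ x, ∃ q : Eucl d, ∀ w, g x + ⟪q, w - x⟫ ≤ g w)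
    (hfL : ∀ x, f x ≤ f 0 + L * ‖x‖) (hgL : ∀ x, g x ≤ g 0 + L * ‖x‖)
    {δ : ℝ} (hδ : 0 < δ) :
    ∃ x p : Eucl d, ‖p‖ < δ ∧
      (∀ w, f w + g w - c * ‖w‖ ^ 2 - ⟪p, w⟫ ≤ f x + g x - c * ‖x‖ ^ 2 - ⟪p, x⟫) ∧
      (∃ q B, HasTaylorTwo f q B x) ∧ ∃ q B, HasTaylorTwo g q B x := by
  have hmax : ∀ p : Eucl d, ∃ x : Eucl d,
      ∀ w, f w + g w - c * ‖w‖ ^ 2 - ⟪p, w⟫ ≤ f x + g x - c * ‖x‖ ^ 2 - ⟪p, x⟫ := by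
    intro p
    refine Continuous.exists_forall_ge (by fun_prop) ?_
    have hn : Tendsto (fun x : Eucl d => ‖x‖) (cocompact _) atTop := tendsto_norm_cocompact_atTop
    -- a concave quadratic lies below each of its tangent lines, in particular one of slope `-1`
    have hb : Tendsto (fun x : Eucl d => -‖x‖ + (f 0 + g 0 + (1 + 2 * L + ‖p‖) ^ 2 / (4 * c)))
        (cocompact _) atBot :=
      tendsto_atBot_add_const_right _ _ (tendsto_neg_atTop_atBot.comp hn)
    refine tendsto_atBot_mono (fun x => ?_) hb
    have h1 := hfL x
    have h2 := hgL x
    have h3 : -(‖p‖ * ‖x‖) ≤ ⟪p, x⟫ := neg_le_of_abs_le (abs_real_inner_le_norm p x)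
    have h4 : (1 + 2 * L + ‖p‖) * ‖x‖ ≤ c * ‖x‖ ^ 2 + (1 + 2 * L + ‖p‖) ^ 2 / (4 * c) := by
      rw [← sub_nonneg]
      have : c * ‖x‖ ^ 2 + (1 + 2 * L + ‖p‖) ^ 2 / (4 * c) - (1 + 2 * L + ‖p‖) * ‖x‖
          = (2 * c * ‖x‖ - (1 + 2 * L + ‖p‖)) ^ 2 / (4 * c) := by field_simp; ring
      rw [this]; positivity
    linarith
  choose X hX using hmax
  by_contra hcon
  push Not at hcon
  have hbad : X '' ball 0 δ ⊆
      {x | ¬ ((∃ q B, HasTaylorTwo f q B x) ∧ ∃ q B, HasTaylorTwo g q B x)} := by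
    rintro _ ⟨p, hp, rfl⟩ ⟨⟨q, B, h1⟩, q', B', h2⟩
    exact hcon (X p) p (by simpa using hp) (hX p) ⟨q, B, h1⟩ q' B' h2
  have hnull : volume (X '' ball (0 : Eucl d) δ) = 0 :=
    measure_mono_null hbad ((alexandrov hfc hf).and (alexandrov hgc hg))
  have hlip : ∀ p p', ‖p - p'‖ ≤ 4 * c * ‖X p - X p'‖ :=
    fun p p' => contact_slope_lipschitz hc hf hg (hX p) (hX p')
  have hinj : InjOn X (ball 0 δ) := by
    intro p _ p' _ h
    have := hlip p p'
    rw [h, sub_self, norm_zero, mul_zero] at this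
    exact sub_eq_zero.1 (norm_le_zero_iff.1 this)
  have hT : LipschitzOnWith ⟨4 * c, by positivity⟩ (Function.invFunOn X (ball 0 δ))
      (X '' ball 0 δ) := by
    refine LipschitzOnWith.of_dist_le_mul ?_
    rintro _ ⟨p, hp, rfl⟩ _ ⟨p', hp', rfl⟩
    rw [hinj.leftInvOn_invFunOn hp, hinj.leftInvOn_invFunOn hp', dist_eq_norm, dist_eq_norm]
    exact hlip p p'
  have := volume_image_eq_zero hT hnull
  rw [hinj.leftInvOn_invFunOn.image_image] at this
  exact (measure_ball_pos volume (0 : Eucl d) hδ).ne this.symm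

/-! ### Second-order jets and viscosity inequalities -/

/-- The matrix of the bilinear form `⟪T ·, ·⟫` in the standard basis. -/
def formMatrix {d : ℕ} (T : Eucl d →L[ℝ] Eucl d) : Matrix (Fin d) (Fin d) ℝ :=
  Matrix.of fun i j => ⟪T (EuclideanSpace.single i 1), EuclideanSpace.single j 1⟫

lemma formMatrix_isSymm {d : ℕ} {T : Eucl d →L[ℝ] Eucl d} (hT : ∀ v w, ⟪T v, w⟫ = ⟪v, T w⟫) :
    (formMatrix T).IsSymm := by
  ext i j
  simp only [formMatrix, Matrix.transpose_apply, Matrix.of_apply]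
  rw [hT, real_inner_comm]

lemma formMatrix_posSemidef {d : ℕ} {T : Eucl d →L[ℝ] Eucl d}
    (hT : ∀ v w, ⟪T v, w⟫ = ⟪v, T w⟫) (h0 : ∀ v, 0 ≤ ⟪T v, v⟫) : (formMatrix T).PosSemidef := by
  refine Matrix.PosSemidef.of_dotProduct_mulVec_nonneg ?_ fun x => ?_
  · rw [Matrix.IsHermitian, Matrix.conjTranspose_eq_transpose_of_trivial]
    exact formMatrix_isSymm hT
  · have hx : (∑ i, x i • EuclideanSpace.single i (1 : ℝ) : Eucl d) = WithLp.toLp 2 x := by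
      ext j
      simp [Pi.single_apply]
    have := h0 (WithLp.toLp 2 x)
    rw [← hx, map_sum, sum_inner] at this
    simp only [inner_sum, map_smul, inner_smul_left, inner_smul_right, conj_trivial] at this
    simp only [dotProduct, Matrix.mulVec, star_trivial, formMatrix, Matrix.of_apply,
      Finset.mul_sum]
    refine this.trans_eq ?_
    refine Finset.sum_congr rfl fun i _ => Finset.sum_congr rfl fun j _ => ?_
    ring

/-- The paraboloid centred at `ξ` with gradient `P` and Hessian `T` there. -/
def paraboloid {d : ℕ} (P : Eucl d) (T : Eucl d →L[ℝ] Eucl d) (ξ ζ : Eucl d) : ℝ :=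
  ⟪P, ζ - ξ⟫ + ⟪T (ζ - ξ), ζ - ξ⟫ / 2

section Paraboloid

variable {d : ℕ} (P : Eucl d) {T : Eucl d →L[ℝ] Eucl d} (ξ : Eucl d)

lemma paraboloid_contDiff : ContDiff ℝ 2 (paraboloid P T ξ) := by
  unfold paraboloid
  have h1 : ContDiff ℝ 2 fun ζ : Eucl d => ζ - ξ := contDiff_id.sub contDiff_const
  exact (contDiff_const.inner ℝ h1).add (((T.contDiff.comp h1).inner ℝ h1).div_const 2)

lemma paraboloid_fderiv (hT : ∀ v w, ⟪T v, w⟫ = ⟪v, T w⟫) (ζ : Eucl d) :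
    fderiv ℝ (paraboloid P T ξ) ζ = innerSL ℝ (P + T (ζ - ξ)) := by
  have h1 : HasFDerivAt (fun ζ : Eucl d => ζ - ξ) (ContinuousLinearMap.id ℝ (Eucl d)) ζ :=
    (hasFDerivAt_id ζ).sub_const ξ
  have h2 : HasFDerivAt (fun ζ : Eucl d => T (ζ - ξ)) T ζ := T.hasFDerivAt.comp ζ h1
  have h3 := ((hasFDerivAt_const P ζ).inner ℝ h1).add ((h2.inner ℝ h1).mul_const (1 / 2 : ℝ))
  have h4 : HasFDerivAt (paraboloid P T ξ) _ ζ :=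
    h3.congr_of_eventuallyEq (Eventually.of_forall fun ζ' => by
      simp [paraboloid, div_eq_mul_inv])
  rw [h4.fderiv]
  ext k
  have hs := hT k (ζ - ξ)
  have hs' := real_inner_comm k (T (ζ - ξ))
  simp [-map_sub, fderivInnerCLM_apply]
  linarith

lemma paraboloid_gradAt (hT : ∀ v w, ⟪T v, w⟫ = ⟪v, T w⟫) :
    gradAt (paraboloid P T ξ) ξ = P := by
  ext i
  simp [gradAt, paraboloid_fderiv P ξ hT, EuclideanSpace.inner_single_right]

lemma paraboloid_hessAt (hT : ∀ v w, ⟪T v, w⟫ = ⟪v, T w⟫) :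
    hessAt (paraboloid P T ξ) ξ = formMatrix T := by
  ext i j
  simp only [hessAt, formMatrix, Matrix.of_apply, paraboloid_fderiv P ξ hT, innerSL_apply_apply]
  have h1 : HasFDerivAt (fun ζ : Eucl d => P + T (ζ - ξ)) T ξ :=
    (T.hasFDerivAt.comp ξ ((hasFDerivAt_id ξ).sub_const ξ)).const_add P
  have h2 := h1.inner ℝ (hasFDerivAt_const (EuclideanSpace.single j (1 : ℝ) : Eucl d) ξ)
  rw [h2.fderiv]
  simp [fderivInnerCLM_apply]

end Paraboloid

lemma tendsto_perturbed_formMatrix {d : ℕ} {G : Matrix (Fin d) (Fin d) ℝ → ℝ} (hG : Continuous G)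
    (T : Eucl d →L[ℝ] Eucl d) :
    Tendsto (fun τ : ℝ => G (formMatrix (T + τ • ContinuousLinearMap.id ℝ (Eucl d)))) (𝓝 0)
      (𝓝 (G (formMatrix T))) := by
  have h1 : Continuous fun τ : ℝ =>
      G (formMatrix (T + τ • ContinuousLinearMap.id ℝ (Eucl d))) := by
    refine hG.comp (continuous_matrix fun i j => ?_)
    simp only [formMatrix, Matrix.of_apply, add_apply, smul_apply, ContinuousLinearMap.id_apply]
    fun_prop
  have := h1.tendsto 0
  have h0 : T + (0 : ℝ) • ContinuousLinearMap.id ℝ (Eucl d) = T := by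
    ext v
    simp
  rwa [h0] at this

lemma symm_perturbed {d : ℕ} {T : Eucl d →L[ℝ] Eucl d} (hT : ∀ v w, ⟪T v, w⟫ = ⟪v, T w⟫) (τ : ℝ)
    (v w : Eucl d) : ⟪(T + τ • ContinuousLinearMap.id ℝ (Eucl d)) v, w⟫
      = ⟪v, (T + τ • ContinuousLinearMap.id ℝ (Eucl d)) w⟫ := by
  simp [inner_add_left, inner_add_right, inner_smul_left, inner_smul_right, hT]

/-- A subsolution satisfies the viscosity inequality for every second-order superjet `(P, T)`. -/
lemma ViscSubsol.of_jet {d : ℕ} {Ω : Set (Eucl d)}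
    {G : Matrix (Fin d) (Fin d) ℝ → Eucl d → ℝ → Eucl d → ℝ} {a u : Eucl d → ℝ}
    (hu : ViscSubsol Ω G a u) {ξ P : Eucl d} (hξ : ξ ∈ Ω) {T : Eucl d →L[ℝ] Eucl d}
    (hT : ∀ v w, ⟪T v, w⟫ = ⟪v, T w⟫) (hG : Continuous fun M => G M P (u ξ) ξ)
    (hjet : ∀ τ > 0, ∀ᶠ k in 𝓝 (0 : Eucl d),
      u (ξ + k) ≤ u ξ + ⟪P, k⟫ + ⟪T k, k⟫ / 2 + τ * ‖k‖ ^ 2) :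
    G (formMatrix T) P (u ξ) ξ ≤ a ξ := by
  have hτ : ∀ τ : ℝ, 0 < τ → G (formMatrix (T + τ • ContinuousLinearMap.id ℝ (Eucl d))) P (u ξ) ξ
      ≤ a ξ := by
    intro τ hτ
    have hs := symm_perturbed hT τ
    have := hu ξ hξ (paraboloid P (T + τ • ContinuousLinearMap.id ℝ (Eucl d)) ξ)
      (paraboloid_contDiff P ξ).contDiffAt ?_
    · rwa [paraboloid_gradAt P ξ hs, paraboloid_hessAt P ξ hs] at this
    · have h0 : Tendsto (fun ζ => ζ - ξ) (𝓝 ξ) (𝓝 0) := by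
        have : Continuous fun ζ => ζ - ξ := by fun_prop
        simpa using this.tendsto ξ
      filter_upwards [h0.eventually (hjet (τ / 2) (by positivity))] with ζ hζ
      rw [add_sub_cancel] at hζ
      simp only [paraboloid, add_apply, smul_apply, ContinuousLinearMap.id_apply, inner_add_left,
        inner_smul_left, conj_trivial, real_inner_self_eq_norm_sq, sub_self, inner_zero_right]
      linarith
  exact le_of_tendsto ((tendsto_perturbed_formMatrix hG T).mono_left nhdsWithin_le_nhds)
    (eventually_nhdsWithin_of_forall (s := Ioi 0) hτ)

/-- A supersolution satisfies the viscosity inequality for every second-order subjet `(P, T)`. -/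
lemma ViscSupersol.of_jet {d : ℕ} {Ω : Set (Eucl d)}
    {G : Matrix (Fin d) (Fin d) ℝ → Eucl d → ℝ → Eucl d → ℝ} {a u : Eucl d → ℝ}
    (hu : ViscSupersol Ω G a u) {ξ P : Eucl d} (hξ : ξ ∈ Ω) {T : Eucl d →L[ℝ] Eucl d}
    (hT : ∀ v w, ⟪T v, w⟫ = ⟪v, T w⟫) (hG : Continuous fun M => G M P (u ξ) ξ)
    (hjet : ∀ τ > 0, ∀ᶠ k in 𝓝 (0 : Eucl d),
      u ξ + ⟪P, k⟫ + ⟪T k, k⟫ / 2 - τ * ‖k‖ ^ 2 ≤ u (ξ + k)) :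
    a ξ ≤ G (formMatrix T) P (u ξ) ξ := by
  have hτ : ∀ τ : ℝ, τ < 0 → a ξ ≤
      G (formMatrix (T + τ • ContinuousLinearMap.id ℝ (Eucl d))) P (u ξ) ξ := by
    intro τ hτ
    have hs := symm_perturbed hT τ
    have := hu ξ hξ (paraboloid P (T + τ • ContinuousLinearMap.id ℝ (Eucl d)) ξ)
      (paraboloid_contDiff P ξ).contDiffAt ?_
    · rwa [paraboloid_gradAt P ξ hs, paraboloid_hessAt P ξ hs] at this
    · have h0 : Tendsto (fun ζ => ζ - ξ) (𝓝 ξ) (𝓝 0) := by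
        have : Continuous fun ζ => ζ - ξ := by fun_prop
        simpa using this.tendsto ξ
      filter_upwards [h0.eventually (hjet (-τ / 2) (by linarith))] with ζ hζ
      rw [add_sub_cancel] at hζ
      simp only [paraboloid, add_apply, smul_apply, ContinuousLinearMap.id_apply, inner_add_left,
        inner_smul_left, conj_trivial, real_inner_self_eq_norm_sq, sub_self, inner_zero_right]
      linarith
  exact ge_of_tendsto ((tendsto_perturbed_formMatrix hG T).mono_left nhdsWithin_le_nhds)
    (eventually_nhdsWithin_of_forall (s := Iio 0) hτ)

/-- Second-order information passes from the sup-convolution at `x` to `u` at the point `ξ` where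
the supremum is attained. -/
lemma IsSupConvolution.jet {d : ℕ} {Ω : Set (Eucl d)} (hΩ : IsOpen Ω) {u f : Eucl d → ℝ} {c : ℝ}
    (hf : IsSupConvolution (closure Ω) u c f) {x ξ q : Eucl d} (hξ : ξ ∈ Ω)
    (hx : f x = u ξ - c / 2 * ‖x - ξ‖ ^ 2 + c / 2 * ‖x‖ ^ 2)
    {B : Eucl d →L[ℝ] Eucl d} (hB : HasTaylorTwo f q B x) {τ : ℝ} (hτ : 0 < τ) :
    ∀ᶠ k in 𝓝 (0 : Eucl d), u (ξ + k) ≤ u ξ + ⟪q - c • x, k⟫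
      + ⟪(B + (-c) • ContinuousLinearMap.id ℝ (Eucl d)) k, k⟫ / 2 + τ * ‖k‖ ^ 2 := by
  have h0 : Tendsto (fun k => ξ + k) (𝓝 0) (𝓝 ξ) := by
    have : Continuous fun k => ξ + k := by fun_prop
    simpa using this.tendsto 0
  filter_upwards [h0.eventually (hΩ.mem_nhds hξ), (isLittleO_iff.1 hB.2) hτ] with k hk ho
  have h1 := hf.2 (x + k) (ξ + k) (subset_closure hk)
  rw [add_sub_add_right_eq_sub, norm_add_sq_real x k] at h1
  rw [norm_pow, norm_norm, Real.norm_eq_abs] at ho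
  have h2 := (abs_le.1 ho).2
  simp only [add_apply, smul_apply, ContinuousLinearMap.id_apply, inner_add_left, inner_sub_left,
    inner_smul_left, conj_trivial, real_inner_self_eq_norm_sq]
  linarith

/-- A second-order Taylor polynomial that is nonpositive up to an error `o(‖k‖²)` has zero gradient
and nonpositive Hessian. -/
lemma quadratic_nonpos {d : ℕ} {a : Eucl d} {M : Eucl d →L[ℝ] Eucl d}
    (h : ∀ τ > 0, ∀ᶠ k in 𝓝 (0 : Eucl d), ⟪a, k⟫ + ⟪M k, k⟫ / 2 ≤ τ * ‖k‖ ^ 2) :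
    a = 0 ∧ ∀ k, ⟪M k, k⟫ ≤ 0 := by
  have hray : ∀ k : Eucl d, ∀ τ > 0, ∀ᶠ t in 𝓝[>] (0 : ℝ),
      ⟪a, k⟫ + t * (⟪M k, k⟫ / 2) ≤ t * (τ * ‖k‖ ^ 2) := by
    intro k τ hτ
    have h0 : Tendsto (fun t : ℝ => t • k) (𝓝[>] 0) (𝓝 0) := by
      have : Continuous fun t : ℝ => t • k := by fun_prop
      have := this.tendsto 0
      rw [zero_smul] at this
      exact this.mono_left nhdsWithin_le_nhds
    filter_upwards [h0.eventually (h τ hτ), self_mem_nhdsWithin] with t ht ht0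
    rw [map_smul, inner_smul_right, inner_smul_right, inner_smul_left, norm_smul, mul_pow,
      Real.norm_eq_abs, sq_abs] at ht
    simp only [conj_trivial] at ht
    have ht0 : 0 < t := ht0
    refine le_of_mul_le_mul_left ?_ ht0
    linarith
  have ha : a = 0 := by
    have h1 : ⟪a, a⟫ ≤ 0 := by
      have hl : Tendsto (fun t : ℝ => ⟪a, a⟫ + t * (⟪M a, a⟫ / 2)) (𝓝[>] 0) (𝓝 ⟪a, a⟫) := by
        have : Continuous fun t : ℝ => ⟪a, a⟫ + t * (⟪M a, a⟫ / 2) := by fun_prop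
        simpa using (this.tendsto 0).mono_left nhdsWithin_le_nhds
      have hr : Tendsto (fun t : ℝ => t * (1 * ‖a‖ ^ 2)) (𝓝[>] 0) (𝓝 0) := by
        have : Continuous fun t : ℝ => t * (1 * ‖a‖ ^ 2) := by fun_prop
        simpa using (this.tendsto 0).mono_left nhdsWithin_le_nhds
      exact le_of_tendsto_of_tendsto hl hr (hray a 1 one_pos)
    rw [real_inner_self_eq_norm_sq] at h1
    exact norm_eq_zero.1 (pow_eq_zero_iff two_ne_zero |>.1 (le_antisymm h1 (sq_nonneg _)))
  refine ⟨ha, fun k => ?_⟩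
  by_contra hlt
  push Not at hlt
  have hτ : 0 < ⟪M k, k⟫ / 4 / (‖k‖ ^ 2 + 1) := by positivity
  obtain ⟨t, ht, ht0⟩ := ((hray k _ hτ).and self_mem_nhdsWithin).exists
  have ht0 : 0 < t := ht0
  rw [ha, inner_zero_left, zero_add] at ht
  have h1 := le_of_mul_le_mul_left ht ht0
  have h2 : ⟪M k, k⟫ / 4 / (‖k‖ ^ 2 + 1) * ‖k‖ ^ 2 ≤ ⟪M k, k⟫ / 4 := by
    rw [div_mul_eq_mul_div, div_le_iff₀ (by positivity)]
    nlinarith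
  linarith

/-- First- and second-order conditions at a point where `f + g - c ‖·‖²` is touched from above by
an affine function of slope `p`. -/
lemma contact_conditions {d : ℕ} {f g : Eucl d → ℝ} {c : ℝ} {x p q₁ q₂ : Eucl d}
    {B₁ B₂ : Eucl d →L[ℝ] Eucl d}
    (hx : ∀ w, f w + g w - c * ‖w‖ ^ 2 - ⟪p, w⟫ ≤ f x + g x - c * ‖x‖ ^ 2 - ⟪p, x⟫)
    (h₁ : HasTaylorTwo f q₁ B₁ x) (h₂ : HasTaylorTwo g q₂ B₂ x) :
    q₁ + q₂ - (2 * c) • x = p ∧ ∀ k, ⟪B₁ k, k⟫ + ⟪B₂ k, k⟫ ≤ 2 * c * ‖k‖ ^ 2 := by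
  have key := quadratic_nonpos (a := q₁ + q₂ - (2 * c) • x - p)
    (M := B₁ + B₂ + (-(2 * c)) • ContinuousLinearMap.id ℝ (Eucl d)) (fun τ hτ => by
      filter_upwards [(isLittleO_iff.1 h₁.2) (half_pos hτ), (isLittleO_iff.1 h₂.2) (half_pos hτ)]
        with k hk₁ hk₂
      rw [norm_pow, norm_norm, Real.norm_eq_abs] at hk₁ hk₂
      have e1 := (abs_le.1 hk₁).1
      have e2 := (abs_le.1 hk₂).1
      have e3 := hx (x + k)
      rw [norm_add_sq_real, inner_add_right] at e3
      simp only [add_apply, smul_apply, ContinuousLinearMap.id_apply, inner_add_left,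
        inner_sub_left, inner_smul_left, conj_trivial, real_inner_self_eq_norm_sq]
      linarith)
  refine ⟨sub_eq_zero.1 key.1, fun k => ?_⟩
  have := key.2 k
  simp only [add_apply, smul_apply, ContinuousLinearMap.id_apply, inner_add_left,
    inner_smul_left, conj_trivial, real_inner_self_eq_norm_sq] at this
  linarith

/-! ### Comparison for one Rothe step -/

lemma eigs_zero {d : ℕ} : eigs (0 : Matrix (Fin d) (Fin d) ℝ) = 0 := by
  have h : (0 : Matrix (Fin d) (Fin d) ℝ).IsHermitian := Matrix.isHermitian_zero
  rw [eigs, dif_pos h]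
  exact h.eigenvalues_eq_zero_iff.2 rfl

lemma pucciPlus_zero {d : ℕ} (lam Lam : ℝ) :
    pucciPlus lam Lam (0 : Matrix (Fin d) (Fin d) ℝ) = 0 := by
  simp [pucciPlus, posPartTrace, negPartTrace, eigs_zero]

lemma specNorm_nonneg {d : ℕ} (M : Matrix (Fin d) (Fin d) ℝ) : 0 ≤ specNorm M :=
  Real.iSup_nonneg fun _ => abs_nonneg _

lemma formMatrix_add {d : ℕ} (S T : Eucl d →L[ℝ] Eucl d) :
    formMatrix (S + T) = formMatrix S + formMatrix T := by
  ext i j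
  simp [formMatrix, inner_add_left]

section Comparison

variable {d : ℕ} {lam Lam gam : ℝ} {Ω : Set (Eucl d)}
  {F : Matrix (Fin d) (Fin d) ℝ → Eucl d → ℝ → Eucl d → ℝ → ℝ}
  {ω : ℝ → ℝ → ℝ} {σ₁ σ₂ : ℝ → ℝ}

lemma continuous_matrix_arg
    (hFcont : ContinuousOn
      (fun q : Matrix (Fin d) (Fin d) ℝ × Eucl d × ℝ × Eucl d × ℝ =>
        F q.1 q.2.1 q.2.2.1 q.2.2.2.1 q.2.2.2.2)
      (univ ×ˢ univ ×ˢ univ ×ˢ closure Ω ×ˢ Ici 0))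
    (P : Eucl d) (r : ℝ) {x : Eucl d} (hx : x ∈ closure Ω) {t : ℝ} (ht : 0 ≤ t) :
    Continuous fun M => F M P r x t := by
  refine hFcont.comp_continuous (f := fun M => (M, P, r, x, t)) (by fun_prop) fun M => ?_
  exact ⟨mem_univ _, mem_univ _, mem_univ _, hx, ht⟩

/-- Comparison of the values of `F` at ordered jets: passing from `X` to the larger `Y` and lowering
the value from `r` to `s` cannot increase `F`, so only the changes of gradient, point and time
contribute. -/
lemma F_jet_le (hlam : 0 < lam)
    (hUE : UniformlyElliptic lam Lam (closure Ω) (Ici 0) F)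
    (hStruct : StructureCondition lam Lam gam ω (closure Ω) (Ici 0) F)
    (hjoint : ∀ (M : Matrix (Fin d) (Fin d) ℝ) (P : Eucl d) (r : ℝ),
      ∀ x ∈ closure Ω, ∀ y ∈ closure Ω, ∀ t ∈ Ici (0:ℝ), ∀ s ∈ Ici (0:ℝ),
        |F M P r x t - F M P r y s| ≤ σ₁ ‖x - y‖ + σ₂ |t - s|)
    {X Y : Eucl d →L[ℝ] Eucl d} (hX : ∀ v w, ⟪X v, w⟫ = ⟪v, X w⟫)
    (hY : ∀ v w, ⟪Y v, w⟫ = ⟪v, Y w⟫) (hXY : ∀ k, ⟪X k, k⟫ ≤ ⟪Y k, k⟫)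
    (P Q : Eucl d) {r s : ℝ} (hsr : s ≤ r) {ξ η : Eucl d} (hξ : ξ ∈ closure Ω)
    (hη : η ∈ closure Ω) {t₁ t₂ : ℝ} (ht₁ : 0 ≤ t₁) (ht₂ : 0 ≤ t₂) :
    F (formMatrix Y) Q s η t₂ ≤ F (formMatrix X) P r ξ t₁ + gam * ‖P - Q‖
      + σ₁ ‖ξ - η‖ + σ₂ |t₁ - t₂| := by
  have hsum : formMatrix Y = formMatrix X + formMatrix (Y - X) := by
    rw [← formMatrix_add, add_sub_cancel]
  have h1 := (hUE (formMatrix X) (formMatrix (Y - X)) (formMatrix_isSymm hX)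
    (formMatrix_posSemidef
      (fun v w => by simp only [sub_apply, inner_sub_left, inner_sub_right, hX, hY])
      (fun v => by simp only [sub_apply, inner_sub_left]; linarith [hXY v])) Q s η hη t₂ ht₂).2
  rw [← hsum] at h1
  have h2 := mul_nonneg hlam.le (specNorm_nonneg (formMatrix (Y - X)))
  have hR : 0 < |r| + |s| + 1 := by positivity
  have h3 := (hStruct.2 _ hR (formMatrix X) (formMatrix X) (formMatrix_isSymm hX)
    (formMatrix_isSymm hX) Q P s r (by linarith [abs_nonneg r]) (by linarith [abs_nonneg s])
    η hη t₂ ht₂).2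
  rw [sub_self, pucciPlus_zero, max_eq_right (sub_nonpos.2 hsr), (hStruct.1 _ hR).2.2,
    norm_sub_rev] at h3
  have h4 := (abs_le.1 (hjoint (formMatrix X) P r ξ hξ η hη t₁ ht₁ t₂ ht₂)).1
  linarith

end Comparison

/-- A form of the theorem on sums. If `u` and `v` vanish on the boundary and `u - v` is positive at
`x₀`, then there are interior points `ξ`, `η` as close together as desired, with `u ξ - v η` almost
as large as `u x₀ - v x₀`, together with a superjet `(P, X)` of `u` at `ξ` and a subjet `(Q, Y)` of `v` at `η` such that `P` is almost `Q`
and `X ≤ Y`. -/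
lemma exists_ordered_jets {d : ℕ} {Ω : Set (Eucl d)} (hΩ : IsOpen Ω)
    (hbdd : Bornology.IsBounded Ω) {u v : Eucl d → ℝ}
    (hu : ContinuousOn u (closure Ω)) (hv : ContinuousOn v (closure Ω))
    (hu0 : ∀ x ∈ frontier Ω, u x = 0) (hv0 : ∀ x ∈ frontier Ω, v x = 0)
    {x₀ : Eucl d} (hx₀ : x₀ ∈ closure Ω) {ρ δ₀ s₀ : ℝ} (hρ : 0 < ρ) (hδ₀ : 0 < δ₀) (hs₀ : 0 < s₀)
    (hκ : 2 * ρ < u x₀ - v x₀) :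
    ∃ ξ ∈ Ω, ∃ η ∈ Ω, ∃ (P Q : Eucl d) (X Y : Eucl d →L[ℝ] Eucl d),
      ‖ξ - η‖ < s₀ ∧ u x₀ - v x₀ - ρ ≤ u ξ - v η ∧ ‖P - Q‖ < δ₀ ∧
      (∀ a b, ⟪X a, b⟫ = ⟪a, X b⟫) ∧ (∀ a b, ⟪Y a, b⟫ = ⟪a, Y b⟫) ∧
      (∀ k, ⟪X k, k⟫ ≤ ⟪Y k, k⟫) ∧
      (∀ τ > 0, ∀ᶠ k in 𝓝 (0 : Eucl d),
        u (ξ + k) ≤ u ξ + ⟪P, k⟫ + ⟪X k, k⟫ / 2 + τ * ‖k‖ ^ 2) ∧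
      (∀ τ > 0, ∀ᶠ k in 𝓝 (0 : Eucl d),
        v η + ⟪Q, k⟫ + ⟪Y k, k⟫ / 2 - τ * ‖k‖ ^ 2 ≤ v (η + k)) := by
  have hK : IsCompact (closure Ω) := hbdd.isCompact_closure
  obtain ⟨R, hR⟩ := hK.isBounded.exists_norm_le
  have hR0 : 0 ≤ R := (norm_nonneg _).trans (hR x₀ hx₀)
  obtain ⟨Mu, hMu⟩ := hK.exists_bound_of_continuousOn hu
  obtain ⟨Mv, hMv⟩ := hK.exists_bound_of_continuousOn hv
  simp only [Real.norm_eq_abs] at hMu hMv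
  have hMu0 : 0 ≤ Mu := (abs_nonneg _).trans (hMu x₀ hx₀)
  have hMv0 : 0 ≤ Mv := (abs_nonneg _).trans (hMv x₀ hx₀)
  obtain ⟨su, hsu, hucu⟩ := Metric.uniformContinuousOn_iff.1
    (hK.uniformContinuousOn_of_continuous hu) ρ hρ
  obtain ⟨sv, hsv, hucv⟩ := Metric.uniformContinuousOn_iff.1
    (hK.uniformContinuousOn_of_continuous hv) ρ hρ
  obtain ⟨s, hs, hs₀', hsu', hsv'⟩ : ∃ s > 0, s ≤ s₀ ∧ s ≤ su ∧ s ≤ sv :=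
    ⟨min s₀ (min su sv), by positivity, min_le_left _ _,
      (min_le_right _ _).trans (min_le_left _ _), (min_le_right _ _).trans (min_le_right _ _)⟩
  obtain ⟨δ, hδ, hδ₀', hδ1, hδR⟩ : ∃ δ > 0, δ ≤ δ₀ ∧ δ ≤ 1 ∧ δ * (1 + 2 * R) ≤ ρ := by
    refine ⟨min δ₀ (min 1 (ρ / (1 + 2 * R))), by positivity, min_le_left _ _,
      (min_le_right _ _).trans (min_le_left _ _), ?_⟩
    rw [← le_div_iff₀ (by positivity)]
    exact (min_le_right _ _).trans (min_le_right _ _)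
  -- a large penalization constant forces the maximizers below to be `s`-close
  obtain ⟨c, hc4, hcs⟩ : ∃ c : ℝ, 4 ≤ c ∧ 8 * (Mu + Mv + ρ) < c * s ^ 2 := by
    refine ⟨4 + 8 * (Mu + Mv + ρ) / s ^ 2, ?_, ?_⟩
    · have : 0 ≤ 8 * (Mu + Mv + ρ) / s ^ 2 := by positivity
      linarith
    · rw [add_mul, div_mul_cancel₀ _ (by positivity)]
      have : 0 < s ^ 2 := by positivity
      linarith
  have hc : 0 < c := by linarith
  obtain ⟨f, hf⟩ := exists_isSupConvolution hK ⟨x₀, hx₀⟩ hu c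
  obtain ⟨g, hg⟩ := exists_isSupConvolution hK ⟨x₀, hx₀⟩ hv.neg c
  obtain ⟨x, p, hp, hmax, ⟨q₁, B₁, h₁⟩, ⟨q₂, B₂, h₂⟩⟩ := jensen (L := c * R) hc
    (hf.continuous hc.le hR0 hR) (hg.continuous hc.le hR0 hR)
    (fun x => (hf.subgradient x).imp' (fun ξ => c • ξ) fun _ h => h.2)
    (fun x => (hg.subgradient x).imp' (fun ξ => c • ξ) fun _ h => h.2)
    (fun x => by simpa using hf.le_add hc.le hR x 0)
    (fun x => by simpa using hg.le_add hc.le hR x 0) hδ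
  obtain ⟨ξ, hξ, hfx⟩ := hf.1 x
  obtain ⟨η, hη, hgx⟩ := hg.1 x
  have hval : u x₀ - v x₀ - ρ + c / 4 * (‖x - ξ‖ ^ 2 + ‖x - η‖ ^ 2) ≤ u ξ - v η := by
    have e1 := hmax x₀
    have e2 := hf.2 x₀ x₀ hx₀
    have e3 := hg.2 x₀ x₀ hx₀
    simp only [sub_self, norm_zero, Pi.neg_apply] at e2 e3 hgx
    have e4 : ⟪p, x₀⟫ - ⟪p, x⟫ ≤ ‖p‖ * ‖x₀ - x‖ := by
      rw [← inner_sub_right]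
      exact real_inner_le_norm _ _
    have e5 : ‖x₀ - x‖ ≤ 1 + 2 * R + ‖x - ξ‖ ^ 2 := by
      have t1 : ‖x₀ - x‖ ≤ ‖x₀ - ξ‖ + ‖x - ξ‖ := by
        rw [norm_sub_rev x ξ]
        exact norm_sub_le_norm_sub_add_norm_sub _ _ _
      have t2 := norm_sub_le x₀ ξ
      have t3 := hR x₀ hx₀
      have t4 := hR ξ hξ
      nlinarith [sq_nonneg (‖x - ξ‖ - 1)]
    have e6 : ‖p‖ * ‖x₀ - x‖ ≤ ρ + ‖x - ξ‖ ^ 2 := by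
      have t1 : ‖p‖ * ‖x₀ - x‖ ≤ δ * (1 + 2 * R + ‖x - ξ‖ ^ 2) := by gcongr
      have t2 : δ * ‖x - ξ‖ ^ 2 ≤ 1 * ‖x - ξ‖ ^ 2 := by gcongr
      linarith
    have e7 : 1 * (‖x - ξ‖ ^ 2 + ‖x - η‖ ^ 2) ≤ c / 4 * (‖x - ξ‖ ^ 2 + ‖x - η‖ ^ 2) := by
      gcongr
      linarith
    have e8 := sq_nonneg ‖x - η‖
    rw [hfx, hgx] at e1
    linarith
  have hgap : u x₀ - v x₀ - ρ ≤ u ξ - v η := by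
    have : 0 ≤ c / 4 * (‖x - ξ‖ ^ 2 + ‖x - η‖ ^ 2) := by positivity
    linarith
  have hclose : ‖ξ - η‖ < s := by
    have t1 : ‖ξ - η‖ ≤ ‖x - ξ‖ + ‖x - η‖ := by
      rw [norm_sub_rev x ξ]
      exact norm_sub_le_norm_sub_add_norm_sub _ _ _
    have t2 := (abs_le.1 (hMu ξ hξ)).2
    have t3 := (abs_le.1 (hMv η hη)).1
    refine lt_of_pow_lt_pow_left₀ 2 hs.le ?_
    have t4 : ‖ξ - η‖ ^ 2 ≤ 2 * (‖x - ξ‖ ^ 2 + ‖x - η‖ ^ 2) := by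
      have : ‖ξ - η‖ ^ 2 ≤ (‖x - ξ‖ + ‖x - η‖) ^ 2 := by gcongr
      nlinarith [sq_nonneg (‖x - ξ‖ - ‖x - η‖)]
    refine lt_of_mul_lt_mul_left ?_ hc.le
    nlinarith
  have hξΩ : ξ ∈ Ω := by
    by_contra hn
    have hfr : ξ ∈ frontier Ω := by rw [hΩ.frontier_eq]; exact ⟨hξ, hn⟩
    have := hucv ξ hξ η hη (by rw [dist_eq_norm]; linarith)
    rw [Real.dist_eq, hv0 ξ hfr] at this
    have := (abs_lt.1 this).2
    rw [hu0 ξ hfr] at hgap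
    linarith
  have hηΩ : η ∈ Ω := by
    by_contra hn
    have hfr : η ∈ frontier Ω := by rw [hΩ.frontier_eq]; exact ⟨hη, hn⟩
    have := hucu ξ hξ η hη (by rw [dist_eq_norm]; linarith)
    rw [Real.dist_eq, hu0 η hfr] at this
    have := (abs_lt.1 this).2
    rw [hv0 η hfr] at hgap
    linarith
  obtain ⟨hpq, hBB⟩ := contact_conditions hmax h₁ h₂
  refine ⟨ξ, hξΩ, η, hηΩ, q₁ - c • x, -(q₂ - c • x),
    B₁ + (-c) • ContinuousLinearMap.id ℝ (Eucl d),
    -(B₂ + (-c) • ContinuousLinearMap.id ℝ (Eucl d)), by linarith, hgap, ?_,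
    symm_perturbed h₁.1 (-c), fun a b => ?_, fun k => ?_, fun τ hτ => hf.jet hΩ hξΩ hfx h₁ hτ,
    fun τ hτ => ?_⟩
  · have : q₁ - c • x - -(q₂ - c • x) = p := by
      rw [← hpq, two_mul, add_smul]
      abel
    rw [this]
    linarith
  · have := symm_perturbed h₂.1 (-c) a b
    simp only [neg_apply, inner_neg_left, inner_neg_right, this]
  · have := hBB k
    simp only [neg_apply, add_apply, smul_apply, ContinuousLinearMap.id_apply, inner_neg_left,
      inner_add_left, inner_smul_left, conj_trivial, real_inner_self_eq_norm_sq]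
    linarith
  · filter_upwards [hg.jet hΩ hηΩ hgx h₂ hτ] with k hk
    simp only [Pi.neg_apply] at hk
    simp only [neg_apply, inner_neg_left]
    linarith

/-- Comparison principle for one implicit time step, with the right-hand sides and the times of
the two equations allowed to differ. -/
lemma rothe_comparison {d : ℕ} {lam Lam gam : ℝ} (hlam : 0 < lam) (hgam : 0 ≤ gam)
    {Ω : Set (Eucl d)} (hΩ : IsOpen Ω) (hbdd : Bornology.IsBounded Ω)
    {F : Matrix (Fin d) (Fin d) ℝ → Eucl d → ℝ → Eucl d → ℝ → ℝ}
    {ω : ℝ → ℝ → ℝ} {σ₁ σ₂ : ℝ → ℝ}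
    (hFcont : ContinuousOn
      (fun q : Matrix (Fin d) (Fin d) ℝ × Eucl d × ℝ × Eucl d × ℝ =>
        F q.1 q.2.1 q.2.2.1 q.2.2.2.1 q.2.2.2.2)
      (univ ×ˢ univ ×ˢ univ ×ˢ closure Ω ×ˢ Ici 0))
    (hUE : UniformlyElliptic lam Lam (closure Ω) (Ici 0) F)
    (hStruct : StructureCondition lam Lam gam ω (closure Ω) (Ici 0) F)
    (hσ₁ : IsModulus σ₁) (hσ₂ : IsModulus σ₂)
    (hjoint : ∀ (M : Matrix (Fin d) (Fin d) ℝ) (P : Eucl d) (r : ℝ),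
      ∀ x ∈ closure Ω, ∀ y ∈ closure Ω, ∀ t ∈ Ici (0:ℝ), ∀ s ∈ Ici (0:ℝ),
        |F M P r x t - F M P r y s| ≤ σ₁ ‖x - y‖ + σ₂ |t - s|)
    {h t₁ t₂ C : ℝ} (hh : 0 < h) (ht₁ : 0 ≤ t₁) (ht₂ : 0 ≤ t₂) (hC : 0 ≤ C)
    {u v a b : Eucl d → ℝ} (hu : ContinuousOn u (closure Ω)) (hv : ContinuousOn v (closure Ω))
    (hb : ContinuousOn b (closure Ω))
    (hu0 : ∀ x ∈ frontier Ω, u x = 0) (hv0 : ∀ x ∈ frontier Ω, v x = 0)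
    (hab : ∀ x ∈ closure Ω, a x - b x ≤ C)
    (husub : ViscSubsol Ω (fun M P r x => F M P r x t₁ + r / h) (fun x => a x / h) u)
    (hvsup : ViscSupersol Ω (fun M P r x => F M P r x t₂ + r / h) (fun x => b x / h) v)
    {x₀ : Eucl d} (hx₀ : x₀ ∈ closure Ω) : u x₀ - v x₀ ≤ C + h * σ₂ |t₁ - t₂| := by
  by_contra hlt
  push Not at hlt
  have hK : IsCompact (closure Ω) := hbdd.isCompact_closure
  have hσ₂0 : 0 ≤ h * σ₂ |t₁ - t₂| :=
    mul_nonneg hh.le (hσ₂.2.2 ▸ hσ₂.1 (abs_nonneg _))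
  -- the excess is shared among the oscillation of `b`, `σ₁`, the gradient term and the loss in
  -- the doubling of variables
  obtain ⟨ρ, hρ, hρe⟩ : ∃ ρ > 0, C + h * σ₂ |t₁ - t₂| + 5 * ρ = u x₀ - v x₀ :=
    ⟨(u x₀ - v x₀ - (C + h * σ₂ |t₁ - t₂|)) / 5, by linarith, by ring⟩
  obtain ⟨sb, hsb, hucb⟩ := Metric.uniformContinuousOn_iff.1
    (hK.uniformContinuousOn_of_continuous hb) ρ hρ
  obtain ⟨sσ, hsσ, hcσ⟩ := Metric.continuousAt_iff.1 (hσ₁.2.1.continuousAt (x := 0)) (ρ / h)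
    (by positivity)
  obtain ⟨ξ, hξ, η, hη, P, Q, X, Y, hclose, hgap, hPQ, hX, hY, hXY, hju, hjv⟩ :=
    exists_ordered_jets hΩ hbdd hu hv hu0 hv0 hx₀ hρ (δ₀ := ρ / (h * gam + 1))
      (by positivity) (lt_min hsb hsσ) (by linarith)
  have hξ' := subset_closure hξ
  have hη' := subset_closure hη
  have e1 := husub.of_jet hξ hX
    ((continuous_matrix_arg hFcont P (u ξ) hξ' ht₁).add continuous_const) hju
  have e2 := hvsup.of_jet hη hY
    ((continuous_matrix_arg hFcont Q (v η) hη' ht₂).add continuous_const) hjv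
  have e3 := F_jet_le hlam hUE hStruct hjoint hX hY hXY P Q (show v η ≤ u ξ by linarith)
    hξ' hη' ht₁ ht₂
  have e4 : h * (gam * ‖P - Q‖) ≤ ρ := by
    have : (h * gam + 1) * ‖P - Q‖ ≤ ρ := by
      rw [mul_comm, ← le_div_iff₀ (by positivity)]
      exact hPQ.le
    linarith [norm_nonneg (P - Q)]
  have e5 : h * σ₁ ‖ξ - η‖ ≤ ρ := by
    have := @hcσ ‖ξ - η‖ (by
      rw [dist_zero_right, norm_norm]
      exact hclose.trans_le (min_le_right _ _))
    rw [hσ₁.2.2, dist_zero_right, Real.norm_eq_abs] at this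
    rw [mul_comm, ← le_div_iff₀ hh]
    exact (le_abs_self _).trans this.le
  have e6 : b ξ - b η < ρ := by
    have := hucb ξ hξ' η hη' (by
      rw [dist_eq_norm]
      exact hclose.trans_le (min_le_left _ _))
    rw [Real.dist_eq] at this
    exact (abs_lt.1 this).2
  have e7 := hab ξ hξ'
  have e8 : u ξ / h - v η / h ≤ a ξ / h - b η / h
      + (gam * ‖P - Q‖ + σ₁ ‖ξ - η‖ + σ₂ |t₁ - t₂|) := by linarith
  have e9 := mul_le_mul_of_nonneg_left e8 hh.le
  simp only [mul_add, mul_sub, mul_div_cancel₀ _ hh.ne'] at e9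
  linarith

lemma abs_le_supNorm {d : ℕ} {Ω : Set (Eucl d)} (hbdd : Bornology.IsBounded Ω) {w : Eucl d → ℝ}
    (hw : ContinuousOn w (closure Ω)) {x : Eucl d} (hx : x ∈ closure Ω) : |w x| ≤ supNorm Ω w :=
  le_csSup (hbdd.isCompact_closure.bddAbove_image hw.abs) ⟨x, hx, rfl⟩

/-- **Inductive Estimation.**  If `F` satisfies the structure condition, is uniformly
elliptic and has joint modulus of continuity `σ₁, σ₂` in `(x,t)`, then the Rothe
approximations satisfy `‖z_{n+1,h} - z_{n,h}‖_∞ ≤ ‖z_{n,h} - z_{n-1,h}‖_∞ + h σ₂(h)` for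
every `n ≥ 1`. -/
theorem inductive_estimation (d : ℕ) (lam Lam gam : ℝ)
    (hlam : 0 < lam) (hlL : lam ≤ Lam) (hgam : 0 ≤ gam)
    (Ω : Set (Eucl d)) (hΩopen : IsOpen Ω) (hΩbdd : Bornology.IsBounded Ω)
    (F : Matrix (Fin d) (Fin d) ℝ → Eucl d → ℝ → Eucl d → ℝ → ℝ)
    (ω : ℝ → ℝ → ℝ) (σ₁ σ₂ : ℝ → ℝ)
    (hFcont : ContinuousOn
      (fun q : Matrix (Fin d) (Fin d) ℝ × Eucl d × ℝ × Eucl d × ℝ =>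
        F q.1 q.2.1 q.2.2.1 q.2.2.2.1 q.2.2.2.2)
      (univ ×ˢ univ ×ˢ univ ×ˢ closure Ω ×ˢ Ici 0))
    (hUE : UniformlyElliptic lam Lam (closure Ω) (Ici 0) F)
    (hStruct : StructureCondition lam Lam gam ω (closure Ω) (Ici 0) F)
    (hσ₁ : IsModulus σ₁) (hσ₂ : IsModulus σ₂)
    (hjoint : ∀ (M : Matrix (Fin d) (Fin d) ℝ) (P : Eucl d) (r : ℝ),
      ∀ x ∈ closure Ω, ∀ y ∈ closure Ω, ∀ t ∈ Ici (0:ℝ), ∀ s ∈ Ici (0:ℝ),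
        |F M P r x t - F M P r y s| ≤ σ₁ ‖x - y‖ + σ₂ |t - s|)
    (h : ℝ) (hh : h ∈ Ioc (0:ℝ) 1)
    (z : ℕ → Eucl d → ℝ) (hz0 : ∀ x, z 0 x = 0)
    (hstep : ∀ m : ℕ, RotheStep Ω F h m (z m) (z (m + 1))) :
    ∀ m : ℕ, 1 ≤ m →
      supNorm Ω (fun x => z (m + 1) x - z m x) ≤
        supNorm Ω (fun x => z m x - z (m - 1) x) + h * σ₂ h := by
  intro m hm
  obtain ⟨k, rfl⟩ : ∃ k, m = k + 1 := ⟨m - 1, by omega⟩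
  rw [Nat.add_sub_cancel]
  have hzc : ∀ j, ContinuousOn (z j) (closure Ω) := by
    rintro (_ | j)
    · exact continuousOn_const.congr fun x _ => hz0 x
    · exact (hstep j).1
  have hσ : 0 ≤ h * σ₂ h := mul_nonneg hh.1.le (hσ₂.2.2 ▸ hσ₂.1 hh.1.le)
  have hnn : 0 ≤ supNorm Ω (fun x => z (k + 1) x - z k x) :=
    Real.sSup_nonneg (by rintro _ ⟨y, -, rfl⟩; exact abs_nonneg _)
  refine Real.sSup_le ?_ (by positivity)
  rintro _ ⟨y, hy, rfl⟩
  have hbound : ∀ x ∈ closure Ω, |z (k + 1) x - z k x|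
      ≤ supNorm Ω (fun x => z (k + 1) x - z k x) := fun x hx =>
    abs_le_supNorm hΩbdd ((hzc (k + 1)).sub (hzc k)) hx
  have hh0 := hh.1
  have ht₁ : (0 : ℝ) ≤ (((k + 1 : ℕ) : ℝ) + 1) * h := by positivity
  have ht₂ : (0 : ℝ) ≤ ((k : ℝ) + 1) * h := by positivity
  have htt : (((k + 1 : ℕ) : ℝ) + 1) * h - ((k : ℝ) + 1) * h = h := by
    push_cast
    ring
  have h₁ := rothe_comparison hlam hgam hΩopen hΩbdd hFcont hUE hStruct hσ₁ hσ₂ hjoint hh.1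
    ht₁ ht₂ hnn (hzc (k + 1 + 1)) (hzc (k + 1)) (hzc k) (hstep (k + 1)).2.2 (hstep k).2.2
    (fun x hx => (abs_le.1 (hbound x hx)).2) (hstep (k + 1)).2.1.1 (hstep k).2.1.2 hy
  have h₂ := rothe_comparison hlam hgam hΩopen hΩbdd hFcont hUE hStruct hσ₁ hσ₂ hjoint hh.1
    ht₂ ht₁ hnn (hzc (k + 1)) (hzc (k + 1 + 1)) (hzc (k + 1)) (hstep k).2.2 (hstep (k + 1)).2.2
    (fun x hx => by linarith [(abs_le.1 (hbound x hx)).1]) (hstep k).2.1.1 (hstep (k + 1)).2.1.2 hy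
  rw [htt, abs_of_pos hh.1] at h₁
  rw [abs_sub_comm, htt, abs_of_pos hh.1] at h₂
  exact abs_le.2 ⟨by linarith, h₁⟩

end
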